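/- arXiv:math/9509223 — 8 statements merged into one kernel-verified Lean document; each statement's English description precedes it below -/
import Mathlib

section
/- (q-binomial theorem) Let q and z be complex numbers with |q| < 1 and |z| < 1, and let a be any complex number. Then the series ∑_{n=0}^∞ ((a;q)_n/(q;q)_n) z^n converges and equals the quotient of infinite products (az;q)_∞/(z;q)_∞. -/
/-- The finite q-shifted factorial `(a;q)_n = ∏_{k=0}^{n-1} (1 - a q^k)`. -/
noncomputable def qPoch (a q : ℂ) (n : ℕ) : ℂ := ∏ k ∈ Finset.range n, (1 - a * q ^ k)

/-- The infinite q-shifted factorial `(a;q)_∞ = ∏_{k=0}^∞ (1 - a q^k)`. -/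
noncomputable def qPochInf (a q : ℂ) : ℂ := ∏' k : ℕ, (1 - a * q ^ k)
lemma qb_den_ne {q : ℂ} (hq : ‖q‖ < 1) {z : ℂ} (hz : ‖z‖ < 1) (n : ℕ) : 1 - z * q ^ n ≠ 0 := by
  intro h
  have h1 : z * q ^ n = 1 := (sub_eq_zero.mp h).symm
  have h2 : ‖z * q ^ n‖ < 1 := by
    rw [norm_mul, norm_pow]
    calc ‖z‖ * ‖q‖ ^ n ≤ ‖z‖ * 1 := by
          gcongr
          exact pow_le_one₀ (norm_nonneg _) hq.le
      _ < 1 := by simpa using hz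
  rw [h1] at h2
  simp at h2

lemma qb_summ {q : ℂ} (hq : ‖q‖ < 1) (x : ℂ) : Summable fun n : ℕ => ‖-(x * q ^ n)‖ := by
  simp only [norm_neg, norm_mul, norm_pow]
  exact (summable_geometric_of_lt_one (norm_nonneg _) hq).mul_left _

lemma qb_tendsto {q : ℂ} (hq : ‖q‖ < 1) (x : ℂ) :
    Filter.Tendsto (fun n => qPoch x q n) Filter.atTop (nhds (qPochInf x q)) := by
  have h := multipliable_one_add_of_summable (qb_summ hq x)
  simp only [← sub_eq_add_neg] at h
  exact h.hasProd.tendsto_prod_nat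

lemma qb_inf_ne {q : ℂ} (hq : ‖q‖ < 1) {z : ℂ} (hz : ‖z‖ < 1) : qPochInf z q ≠ 0 := by
  have h := tprod_one_add_ne_zero_of_summable (f := fun n : ℕ => -(z * q ^ n))
    (fun n => by rw [← sub_eq_add_neg]; exact qb_den_ne hq hz n) (qb_summ hq z)
  simp only [← sub_eq_add_neg] at h
  exact h

lemma qb_coeff {q : ℂ} (hq : ‖q‖ < 1) (a : ℂ) (n : ℕ) :
    qPoch a q (n + 1) / qPoch q q (n + 1) =
      qPoch a q n / qPoch q q n * ((1 - a * q ^ n) / (1 - q * q ^ n)) := by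
  rw [qPoch, qPoch, Finset.prod_range_succ, Finset.prod_range_succ, mul_div_mul_comm]
  rfl

lemma qb_summable {q z : ℂ} (a : ℂ) (hq : ‖q‖ < 1) (hz : ‖z‖ < 1) :
    Summable (fun n : ℕ => qPoch a q n / qPoch q q n * z ^ n) := by
  obtain ⟨r, hr, hr1⟩ := exists_between hz
  refine summable_of_ratio_norm_eventually_le hr1 ?_
  have hp : Filter.Tendsto (fun n : ℕ => q ^ n) Filter.atTop (nhds 0) :=
    tendsto_pow_atTop_nhds_zero_of_norm_lt_one hq
  have ht : Filter.Tendsto (fun n : ℕ => ‖(1 - a * q ^ n) / (1 - q * q ^ n) * z‖)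
      Filter.atTop (nhds ‖(1 - a * 0) / (1 - q * 0) * z‖) :=
    ((((hp.const_mul a).const_sub 1).div ((hp.const_mul q).const_sub 1) (by simp)).mul_const z).norm
  have hlt : ‖(1 - a * 0) / (1 - q * 0) * z‖ < r := by simpa using hr
  filter_upwards [ht.eventually_lt_const hlt] with n hn
  rw [qb_coeff hq, pow_succ]
  calc _ = ‖(1 - a * q ^ n) / (1 - q * q ^ n) * z‖ * ‖qPoch a q n / qPoch q q n * z ^ n‖ := by
        rw [← norm_mul]; congr 1; ring
    _ ≤ _ := by gcongr

lemma qb_func {q z : ℂ} (a : ℂ) (hq : ‖q‖ < 1) (hz : ‖z‖ < 1) :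
    (1 - z) * ∑' n : ℕ, qPoch a q n / qPoch q q n * z ^ n =
      (1 - a * z) * ∑' n : ℕ, qPoch a q n / qPoch q q n * (z * q) ^ n := by
  have hzq : ‖z * q‖ < 1 := by
    rw [norm_mul]
    exact mul_lt_one_of_nonneg_of_lt_one_left (norm_nonneg _) hz hq.le
  have s1 := qb_summable a hq hz
  have s2 := qb_summable a hq hzq
  have e1 := (s1.sub s2).tsum_eq_zero_add
  rw [s1.tsum_sub s2] at e1
  have e2 : ∀ n : ℕ, qPoch a q (n + 1) / qPoch q q (n + 1) * z ^ (n + 1)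
      - qPoch a q (n + 1) / qPoch q q (n + 1) * (z * q) ^ (n + 1)
      = z * (qPoch a q n / qPoch q q n * z ^ n)
        - a * z * (qPoch a q n / qPoch q q n * (z * q) ^ n) := by
    intro n
    rw [qb_coeff hq]
    have := qb_den_ne hq hq n
    generalize qPoch a q n / qPoch q q n = c
    simp only [mul_pow, pow_succ]
    generalize q ^ n = w at *
    generalize z ^ n = v
    have hd := div_mul_cancel₀ (1 - a * w) this
    generalize (1 - a * w) / (1 - q * w) = d at *
    linear_combination c * v * z * hd
  simp only [e2] at e1
  rw [(s1.mul_left z).tsum_sub (s2.mul_left (a * z)), tsum_mul_left, tsum_mul_left] at e1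
  simp only [pow_zero, sub_self, zero_add] at e1
  linear_combination e1

lemma qb_iter {q z : ℂ} (a : ℂ) (hq : ‖q‖ < 1) (hz : ‖z‖ < 1) (N : ℕ) :
    qPoch z q N * ∑' n : ℕ, qPoch a q n / qPoch q q n * z ^ n =
      qPoch (a * z) q N * ∑' n : ℕ, qPoch a q n / qPoch q q n * (z * q ^ N) ^ n := by
  induction N with
  | zero => simp [qPoch]
  | succ N ih =>
    have hzq : ‖z * q ^ N‖ < 1 := by
      rw [norm_mul, norm_pow]
      exact mul_lt_one_of_nonneg_of_lt_one_left (norm_nonneg _) hz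
        (pow_le_one₀ (norm_nonneg _) hq.le)
    have h := qb_func a hq hzq
    have h1 : ∀ x : ℂ, qPoch x q (N + 1) = qPoch x q N * (1 - x * q ^ N) := fun x => by
      rw [qPoch, Finset.prod_range_succ]; rfl
    rw [h1, h1, pow_succ, ← mul_assoc z]
    linear_combination (1 - z * q ^ N) * ih + qPoch (a * z) q N * h

lemma qb_lim {q z : ℂ} (a : ℂ) (hq : ‖q‖ < 1) (hz : ‖z‖ < 1) :
    Filter.Tendsto (fun N : ℕ => ∑' n : ℕ, qPoch a q n / qPoch q q n * (z * q ^ N) ^ n)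
      Filter.atTop (nhds 1) := by
  have hp : Filter.Tendsto (fun n : ℕ => q ^ n) Filter.atTop (nhds 0) :=
    tendsto_pow_atTop_nhds_zero_of_norm_lt_one hq
  have h := tendsto_tsum_of_dominated_convergence (𝓕 := Filter.atTop)
    (f := fun N n : ℕ => qPoch a q n / qPoch q q n * (z * q ^ N) ^ n)
    (g := fun n : ℕ => qPoch a q n / qPoch q q n * (z * 0) ^ n)
    (qb_summable a hq hz).norm
    (fun n => ((hp.const_mul z).pow n).const_mul _)
    (Filter.Eventually.of_forall fun N n => by
      rw [norm_mul, norm_mul, norm_pow, norm_pow, norm_mul, norm_pow]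
      gcongr
      exact mul_le_of_le_one_right (norm_nonneg _) (pow_le_one₀ (norm_nonneg _) hq.le))
  rw [tsum_eq_single 0 (by intro n hn; simp [hn])] at h
  simpa [qPoch] using h

/-- The q-binomial theorem: for `|q| < 1` and `|z| < 1`,
`∑_{n=0}^∞ ((a;q)_n/(q;q)_n) z^n = (az;q)_∞/(z;q)_∞`. -/
theorem q_binomial_theorem (q z a : ℂ) (hq : ‖q‖ < 1) (hz : ‖z‖ < 1) :
    HasSum (fun n : ℕ => qPoch a q n / qPoch q q n * z ^ n)
      (qPochInf (a * z) q / qPochInf z q) := by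
  have h1 := (qb_tendsto hq z).mul_const (∑' n : ℕ, qPoch a q n / qPoch q q n * z ^ n)
  have h2 := (qb_tendsto hq (a * z)).mul (qb_lim a hq hz)
  simp only [qb_iter a hq hz] at h1
  have h := tendsto_nhds_unique h1 h2
  have e : ∑' n : ℕ, qPoch a q n / qPoch q q n * z ^ n = qPochInf (a * z) q / qPochInf z q := by
    rw [eq_div_iff (qb_inf_ne hq hz)]
    linear_combination h
  rw [← e]
  exact (qb_summable a hq hz).hasSum
end

section
/- For every complex number z and every complex q with |q| < 1, the q-exponential series E_q(z) = ∑_{n=0}^∞ (q^{n(n-1)/2}/(q;q)_n) z^n converges and equals the infinite product (-z;q)_∞ = ∏_{k=0}^∞ (1 + z q^k). -/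
theorem qe_c_succ (q : ℂ) (hq : ‖q‖ < 1) (n : ℕ) :
    q ^ ((n+1) * ((n+1) - 1) / 2) / qPoch q q (n+1) * (1 - q ^ (n+1))
      = q ^ (n * (n - 1) / 2) / qPoch q q n * q ^ n := by
  have h1 : (n+1) * ((n+1) - 1) / 2 = n * (n - 1) / 2 + n := by
    have := Finset.sum_range_id_mul_two n
    have h2 := Finset.sum_range_id_mul_two (n+1)
    rw [Finset.sum_range_succ] at h2
    omega
  have hne : ∀ k : ℕ, (1 - q ^ (k+1)) ≠ 0 := by
    intro k h
    have h3 : q ^ (k+1) = 1 := (sub_eq_zero.mp h).symm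
    have h4 : ‖q‖ ^ (k+1) < 1 := pow_lt_one₀ (norm_nonneg _) hq (by omega)
    rw [← norm_pow, h3] at h4
    simp at h4
  have hP : qPoch q q (n+1) = qPoch q q n * (1 - q ^ (n+1)) := by
    simp only [qPoch, Finset.prod_range_succ]
    ring
  have hP0 : qPoch q q n ≠ 0 := by
    unfold qPoch
    refine Finset.prod_ne_zero_iff.mpr fun k _ => ?_
    have := hne k
    rwa [pow_succ'] at this
  have := hne n
  rw [h1, hP, pow_add]
  field_simp

theorem qe_summable (q z : ℂ) (hq : ‖q‖ < 1) :
    Summable (fun n : ℕ => q ^ (n * (n - 1) / 2) / qPoch q q n * z ^ n) := by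
  have ht : Filter.Tendsto (fun n : ℕ => ‖q ^ n * z‖ - 1/2 * ‖1 - q ^ (n+1)‖) Filter.atTop
      (nhds (‖(0:ℂ) * z‖ - 1/2 * ‖1 - (0:ℂ)‖)) := by
    have h0 := tendsto_pow_atTop_nhds_zero_of_norm_lt_one hq
    have h1 := (Filter.tendsto_add_atTop_iff_nat 1).mpr h0
    exact (h0.mul_const z).norm.sub (((tendsto_const_nhds.sub h1).norm).const_mul _)
  have he := ht.eventually (gt_mem_nhds (show (‖(0:ℂ) * z‖ - 1/2 * ‖1 - (0:ℂ)‖) < 0 by norm_num))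
  refine summable_of_ratio_norm_eventually_le (r := 1/2) (by norm_num) ?_
  filter_upwards [he] with n hn
  have hc := congrArg norm (congrArg (· * z ^ (n+1)) (qe_c_succ q hq n))
  set A := q ^ ((n+1) * ((n+1) - 1) / 2) / qPoch q q (n+1)
  set B := q ^ (n * (n - 1) / 2) / qPoch q q n
  have h1 : ‖A * z ^ (n+1)‖ * ‖1 - q ^ (n+1)‖ = ‖B * z ^ n‖ * ‖q ^ n * z‖ := by
    rw [← norm_mul, ← norm_mul]
    calc _ = ‖A * (1 - q ^ (n+1)) * z ^ (n+1)‖ := by ring_nf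
      _ = _ := hc
      _ = _ := by ring_nf
  have hpos : 0 < ‖1 - q ^ (n+1)‖ := by
    have := norm_nonneg (q ^ n * z)
    linarith
  refine le_of_mul_le_mul_right ?_ hpos
  rw [h1]
  have := norm_nonneg (B * z ^ n)
  nlinarith

theorem qe_func (q z : ℂ) (hq : ‖q‖ < 1) :
    (∑' n : ℕ, q ^ (n * (n - 1) / 2) / qPoch q q n * z ^ n) =
      (1 + z) * ∑' n : ℕ, q ^ (n * (n - 1) / 2) / qPoch q q n * (z * q) ^ n := by
  have s1 := qe_summable q z hq
  have s2 := qe_summable q (z * q) hq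
  have hd : (∑' n : ℕ, q ^ (n * (n - 1) / 2) / qPoch q q n * z ^ n) -
      (∑' n : ℕ, q ^ (n * (n - 1) / 2) / qPoch q q n * (z * q) ^ n) =
      z * ∑' n : ℕ, q ^ (n * (n - 1) / 2) / qPoch q q n * (z * q) ^ n := by
    rw [← s1.tsum_sub s2, (s1.sub s2).tsum_eq_zero_add, ← tsum_mul_left]
    simp only [pow_zero, sub_self, zero_add]
    refine tsum_congr fun n => ?_
    have hc := qe_c_succ q hq n
    linear_combination z ^ (n+1) * hc
  linear_combination hd

theorem qe_iter (q z : ℂ) (hq : ‖q‖ < 1) (N : ℕ) :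
    (∑' n : ℕ, q ^ (n * (n - 1) / 2) / qPoch q q n * z ^ n) =
      (∏ k ∈ Finset.range N, (1 - (-z) * q ^ k)) *
        ∑' n : ℕ, q ^ (n * (n - 1) / 2) / qPoch q q n * (z * q ^ N) ^ n := by
  induction N with
  | zero => simp
  | succ N ih =>
    rw [ih, qe_func q (z * q ^ N) hq, Finset.prod_range_succ, pow_succ q N, ← mul_assoc z]
    ring

/-- For `|q| < 1` and all complex `z`, the q-exponential series
`E_q(z) = ∑_{n=0}^∞ (q^{n(n-1)/2}/(q;q)_n) z^n` converges to `(-z;q)_∞`. -/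
theorem q_exponential_Eq (q z : ℂ) (hq : ‖q‖ < 1) :
    HasSum (fun n : ℕ => q ^ (n * (n - 1) / 2) / qPoch q q n * z ^ n)
      (qPochInf (-z) q) := by
  have s := qe_summable q z hq
  have hm : Multipliable (fun k : ℕ => 1 - (-z) * q ^ k) := by
    have := multipliable_one_add_of_summable (f := fun k : ℕ => z * q ^ k)
      ((summable_geometric_of_norm_lt_one hq).mul_left z).norm
    refine this.congr fun k => ?_
    ring
  have h1 := hm.hasProd.tendsto_prod_nat
  have h0 := tendsto_pow_atTop_nhds_zero_of_norm_lt_one hq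
  have h2 : Filter.Tendsto
      (fun N : ℕ => ∑' n : ℕ, q ^ (n * (n - 1) / 2) / qPoch q q n * (z * q ^ N) ^ n) Filter.atTop
      (nhds (∑' n : ℕ, q ^ (n * (n - 1) / 2) / qPoch q q n * (z * 0) ^ n)) := by
    refine tendsto_tsum_of_dominated_convergence s.norm
      (fun n => ((h0.const_mul z).pow n).const_mul _) (Filter.Eventually.of_forall fun N n => ?_)
    rw [norm_mul, norm_mul _ (z ^ n), norm_pow, norm_pow z]
    gcongr
    rw [norm_mul, norm_pow]
    exact mul_le_of_le_one_right (norm_nonneg _) (pow_le_one₀ (norm_nonneg _) hq.le)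
  have h3 : (∑' n : ℕ, q ^ (n * (n - 1) / 2) / qPoch q q n * (z * 0) ^ n) = 1 := by
    rw [tsum_eq_single 0]
    · simp [qPoch]
    · intro n hn
      simp [hn]
  rw [h3] at h2
  have h4 := h1.mul h2
  simp only [← qe_iter q z hq, mul_one] at h4
  have h5 := tendsto_nhds_unique h4 tendsto_const_nhds
  unfold qPochInf
  rw [h5]
  exact s.hasSum
end

section
/- (Jacobi's triple product identity) For all complex numbers q and z with |q| < 1 and z ≠ 0, ∑_{k=-∞}^{∞} q^{k²} z^k = (q²;q²)_∞ (-qz;q²)_∞ (-q/z;q²)_∞. -/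
open Filter Topology

/-- Gaussian binomial coefficients. -/
def JB (p : ℂ) : ℕ → ℕ → ℂ
  | _, 0 => 1
  | 0, _ + 1 => 0
  | m + 1, k + 1 => p ^ (k + 1) * JB p m (k + 1) + JB p m k

lemma JB_zero (p : ℂ) (m : ℕ) : JB p m 0 = 1 := by cases m <;> simp [JB]

lemma JB_gt (p : ℂ) (m : ℕ) : ∀ k, m < k → JB p m k = 0 := by
  induction m with
  | zero => intro k hk; cases k with
    | zero => omega
    | succ k => simp [JB]
  | succ m ih => intro k hk; cases k with
    | zero => omega
    | succ k => simp [JB, ih (k + 1) (by omega), ih k (by omega)]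

/-- finite Pochhammer -/
def JP (p : ℂ) (n : ℕ) : ℂ := ∏ k ∈ Finset.range n, (1 - p * p ^ k)

lemma JP_succ (p : ℂ) (n : ℕ) : JP p (n + 1) = JP p n * (1 - p * p ^ n) := by
  simp [JP, Finset.prod_range_succ]

lemma JB_JP (p : ℂ) (m : ℕ) : ∀ a b, a + b = m → JB p m a * JP p a * JP p b = JP p m := by
  induction m with
  | zero =>
    intro a b h
    obtain rfl : a = 0 := by omega
    obtain rfl : b = 0 := by omega
    simp [JB, JP]
  | succ m ih =>
    intro a b h
    cases a with
    | zero =>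
      obtain rfl : b = m + 1 := by omega
      simp [JB, JP]
    | succ a =>
      have h2 := ih a b (by omega)
      cases b with
      | zero =>
        obtain rfl : a = m := by omega
        have : JP p 0 = 1 := by simp [JP]
        rw [this] at h2 ⊢
        rw [JB, JB_gt p a (a + 1) (by omega), JP_succ]
        linear_combination (1 - p * p ^ a) * h2
      | succ b =>
        have h1 := ih (a + 1) b (by omega)
        obtain rfl : m = a + b + 1 := by omega
        rw [JB, JP_succ p (a + b + 1)]
        rw [JP_succ p b] at h2 ⊢
        rw [JP_succ p a] at h1 ⊢
        have e : p ^ (a + b + 1) = p ^ a * p ^ b * p := by ring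
        rw [e]
        linear_combination p ^ (a + 1) * (1 - p * p ^ b) * h1 + (1 - p * p ^ a) * h2

lemma q_binom (p : ℂ) (m : ℕ) : ∀ x : ℂ, ∏ j ∈ Finset.range m, (1 + x * p ^ j) =
    ∑ k ∈ Finset.range (m + 1), p ^ (k.choose 2) * JB p m k * x ^ k := by
  induction m with
  | zero => intro x; simp [JB]
  | succ m ih =>
    intro x
    have hL : ∏ j ∈ Finset.range (m + 1), (1 + x * p ^ j)
        = (1 + x) * ∏ j ∈ Finset.range m, (1 + (x * p) * p ^ j) := by
      rw [Finset.prod_range_succ', mul_comm]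
      congr 1
      · simp
      · refine Finset.prod_congr rfl fun j _ => ?_
        ring
    rw [hL, ih, Finset.sum_range_succ' _ (m + 1), add_mul, one_mul]
    have h1 : ∑ k ∈ Finset.range (m + 1), p ^ (k.choose 2) * JB p m k * (x * p) ^ k
        = ∑ k ∈ Finset.range (m + 1), p ^ ((k + 1).choose 2) * (p ^ (k + 1) * JB p m (k + 1))
            * x ^ (k + 1) + 1 := by
      have := Finset.sum_range_succ' (fun k => p ^ (k.choose 2) * JB p m k * (x * p) ^ k) (m + 1)
      rw [Finset.sum_range_succ, JB_gt p m (m + 1) (by omega)] at this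
      simp only [mul_zero, zero_mul, add_zero] at this
      rw [this]
      congr 1
      · refine Finset.sum_congr rfl fun j _ => ?_
        rw [mul_pow]; ring
      · simp [JB_zero]
    have h2 : x * ∑ k ∈ Finset.range (m + 1), p ^ (k.choose 2) * JB p m k * (x * p) ^ k
        = ∑ k ∈ Finset.range (m + 1), p ^ ((k + 1).choose 2) * JB p m k * x ^ (k + 1) := by
      rw [Finset.mul_sum]
      refine Finset.sum_congr rfl fun k _ => ?_
      have : (k + 1).choose 2 = k + k.choose 2 := by
        rw [Nat.choose_succ_succ' k 1, Nat.choose_one_right]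
      rw [this, mul_pow, pow_add]; ring
    rw [h2, h1]
    have h3 : p ^ (Nat.choose 0 2) * JB p (m + 1) 0 * x ^ 0 = 1 := by simp [JB]
    rw [h3, add_right_comm, ← Finset.sum_add_distrib]
    congr 1
    refine Finset.sum_congr rfl fun k _ => ?_
    rw [JB]; ring

/-- general term -/
noncomputable def JT (q z : ℂ) (k : ℤ) : ℂ := q ^ (k ^ 2) * z ^ k

lemma JT_shift (q z : ℂ) (hq : q ≠ 0) (hz : z ≠ 0) (n k : ℕ) :
    (q ^ 2) ^ (k.choose 2) * (z * q / (q ^ 2) ^ n) ^ k =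
      (z ^ n / q ^ (n ^ 2)) * JT q z ((k : ℤ) - n) := by
  have h2 : (2 : ℤ) * (k.choose 2 : ℤ) = k * (k - 1) := by
    have := Nat.triangle_succ (k - 1)
    have h := Finset.sum_range_id_mul_two k
    rw [Finset.sum_range_id, ← Nat.choose_two_right] at h
    cases k with
    | zero => simp
    | succ k =>
      simp only [Nat.add_sub_cancel] at h
      push_cast
      have h' : ((((k + 1).choose 2 * 2 : ℕ)) : ℤ) = ((k + 1) * k : ℕ) := by rw [h]
      push_cast at h'
      linarith
  have e1 : (q ^ 2) ^ (k.choose 2) = q ^ ((k : ℤ) * (k - 1)) := by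
    rw [← h2, zpow_mul]; norm_cast
  have e2 : z * q / (q ^ 2) ^ n = z * q ^ (1 - 2 * (n : ℤ)) := by
    rw [zpow_sub₀ hq, zpow_one, zpow_mul, mul_div_assoc]; norm_cast
  have e3 : q ^ (n ^ 2) = q ^ ((n : ℤ) ^ 2) := by norm_cast
  rw [e1, e2, e3, JT, mul_pow, zpow_sub₀ hz, zpow_natCast, zpow_natCast, ← zpow_natCast (q ^ _) k,
    ← zpow_mul]
  have e4 : ((k : ℤ) - n) ^ 2 = (k : ℤ) * (k - 1) + (1 - 2 * (n : ℤ)) * k + (n : ℤ) ^ 2 := by ring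
  rw [e4, zpow_add₀ hq, zpow_add₀ hq]
  have := zpow_ne_zero ((n : ℤ) ^ 2) hq
  have := pow_ne_zero n hz
  field_simp

lemma prod_part (q z : ℂ) (hq : q ≠ 0) (hz : z ≠ 0) (n : ℕ) :
    ∏ j ∈ Finset.range n, (1 + (z * q / (q ^ 2) ^ n) * (q ^ 2) ^ j) =
      (z ^ n / q ^ (n ^ 2)) * ∏ j ∈ Finset.range n, (1 - -(q / z) * (q ^ 2) ^ j) := by
  have h : ∀ n : ℕ, z ^ n / q ^ (n ^ 2) = ∏ j ∈ Finset.range n, (z / (q * (q ^ 2) ^ j)) := by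
    intro n
    induction n with
    | zero => simp
    | succ n ih =>
      rw [Finset.prod_range_succ, ← ih, div_mul_div_comm]
      congr 1
      rw [← pow_mul]; ring
  rw [h, ← Finset.prod_mul_distrib, ← Finset.prod_range_reflect]
  refine Finset.prod_congr rfl fun j hj => ?_
  have hj := Finset.mem_range.1 hj
  obtain ⟨d, rfl⟩ : ∃ d, n = d + (j + 1) := ⟨n - (j + 1), by omega⟩
  have : d + (j + 1) - 1 - j = d := by omega
  rw [this, pow_add]
  have := pow_ne_zero d (pow_ne_zero 2 hq)
  have := pow_ne_zero j (pow_ne_zero 2 hq)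
  have e : z * q / ((q ^ 2) ^ d * (q ^ 2) ^ (j + 1)) * (q ^ 2) ^ d = z / (q * (q ^ 2) ^ j) := by
    rw [pow_succ (q ^ 2) j]
    generalize (q ^ 2) ^ j = u at *
    generalize (q ^ 2) ^ d = v at *
    field_simp
  rw [e]
  generalize (q ^ 2) ^ j = u at *
  field_simp
  ring

lemma finite_jtp (q z : ℂ) (hq : q ≠ 0) (hz : z ≠ 0) (n : ℕ) :
    ∑ k ∈ Finset.range (2 * n + 1), JB (q ^ 2) (2 * n) k * JT q z ((k : ℤ) - n) =
      (∏ j ∈ Finset.range n, (1 - -(q * z) * (q ^ 2) ^ j)) *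
        ∏ j ∈ Finset.range n, (1 - -(q / z) * (q ^ 2) ^ j) := by
  have h := q_binom (q ^ 2) (2 * n) (z * q / (q ^ 2) ^ n)
  have hc : z ^ n / q ^ (n ^ 2) ≠ 0 := div_ne_zero (pow_ne_zero _ hz) (pow_ne_zero _ hq)
  have hL := Finset.prod_range_add (fun j => 1 + (z * q / (q ^ 2) ^ n) * (q ^ 2) ^ j) n n
  rw [← two_mul] at hL
  rw [hL, prod_part q z hq hz n] at h
  have h1 : ∏ j ∈ Finset.range n, (1 + z * q / (q ^ 2) ^ n * (q ^ 2) ^ (n + j)) =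
      ∏ j ∈ Finset.range n, (1 - -(q * z) * (q ^ 2) ^ j) := by
    refine Finset.prod_congr rfl fun j _ => ?_
    have := pow_ne_zero n (pow_ne_zero 2 hq)
    rw [pow_add]
    generalize (q ^ 2) ^ n = v at *
    field_simp
    ring
  have h2 : ∑ k ∈ Finset.range (2 * n + 1),
      (q ^ 2) ^ (k.choose 2) * JB (q ^ 2) (2 * n) k * (z * q / (q ^ 2) ^ n) ^ k =
      (z ^ n / q ^ (n ^ 2)) *
      ∑ k ∈ Finset.range (2 * n + 1), JB (q ^ 2) (2 * n) k * JT q z ((k : ℤ) - n) := by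
    rw [Finset.mul_sum]
    refine Finset.sum_congr rfl fun k _ => ?_
    linear_combination JB (q ^ 2) (2 * n) k * JT_shift q z hq hz n k
  rw [h1, h2] at h
  apply mul_left_cancel₀ hc
  rw [← h]; ring

lemma JT_summable_nat (q z : ℂ) (hq : q ≠ 0) (hq1 : ‖q‖ < 1) (hz : z ≠ 0) :
    Summable (fun n : ℕ => JT q z n) := by
  have hne : ∀ k, JT q z k ≠ 0 := fun k => mul_ne_zero (zpow_ne_zero _ hq) (zpow_ne_zero _ hz)
  refine summable_of_ratio_test_tendsto_lt_one (l := 0) one_pos (Eventually.of_forall fun n => hne _) ?_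
  have : ∀ n : ℕ, ‖JT q z (n + 1 : ℕ)‖ / ‖JT q z n‖ = ‖q‖ * ‖z‖ * (‖q‖ ^ 2) ^ n := by
    intro n
    rw [div_eq_iff (norm_ne_zero_iff.2 (hne _)), JT, JT]
    have e : (((n + 1 : ℕ) : ℤ)) ^ 2 = (n : ℤ) ^ 2 + (2 * n + 1 : ℕ) := by push_cast; ring
    rw [e, zpow_add₀ hq, zpow_natCast, zpow_natCast, zpow_natCast]
    simp only [norm_mul, norm_pow]
    ring
  simp_rw [this]
  have h := (tendsto_pow_atTop_nhds_zero_of_lt_one (r := ‖q‖ ^ 2) (by positivity)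
    (pow_lt_one₀ (norm_nonneg _) hq1 two_ne_zero)).const_mul (‖q‖ * ‖z‖)
  simpa using h

lemma JT_neg (q z : ℂ) (k : ℤ) : JT q z (-k) = JT q z⁻¹ k := by
  simp [JT]

lemma JT_summable (q z : ℂ) (hq : q ≠ 0) (hq1 : ‖q‖ < 1) (hz : z ≠ 0) :
    Summable (JT q z) := by
  refine Summable.of_nat_of_neg_add_one (JT_summable_nat q z hq hq1 hz) ?_
  have := (summable_nat_add_iff 1).2 (JT_summable_nat q z⁻¹ hq hq1 (inv_ne_zero hz))
  refine this.congr fun n => ?_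
  rw [JT_neg]; norm_cast

lemma poch_summable (a p : ℂ) (hp : ‖p‖ < 1) : Summable (fun k : ℕ => ‖-(a * p ^ k)‖) := by
  simp only [norm_neg, norm_mul, norm_pow]
  exact (summable_geometric_of_lt_one (norm_nonneg _) hp).mul_left _

lemma poch_tendsto (a p : ℂ) (hp : ‖p‖ < 1) :
    Tendsto (fun n => ∏ k ∈ Finset.range n, (1 - a * p ^ k)) atTop (𝓝 (qPochInf a p)) := by
  have h := (multipliable_one_add_of_summable (poch_summable a p hp)).hasProd.tendsto_prod_nat
  simpa only [← sub_eq_add_neg, qPochInf] using h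

lemma one_sub_ne (p : ℂ) (hp : ‖p‖ < 1) (k : ℕ) : 1 - p * p ^ k ≠ 0 := by
  intro h
  have h1 : p ^ (k + 1) = 1 := by rw [pow_succ']; exact (sub_eq_zero.1 h).symm
  have h2 : ‖p‖ ^ (k + 1) < 1 := pow_lt_one₀ (norm_nonneg _) hp (by omega)
  rw [← norm_pow, h1] at h2
  simp at h2

lemma poch_ne (p : ℂ) (hp : ‖p‖ < 1) : qPochInf p p ≠ 0 := by
  have := tprod_one_add_ne_zero_of_summable (f := fun k : ℕ => -(p * p ^ k))
    (fun k => by rw [← sub_eq_add_neg]; exact one_sub_ne p hp k) (poch_summable p p hp)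
  simpa only [← sub_eq_add_neg, qPochInf] using this

lemma JP_ne (p : ℂ) (hp : ‖p‖ < 1) (n : ℕ) : JP p n ≠ 0 :=
  Finset.prod_ne_zero_iff.2 fun k _ => one_sub_ne p hp k

lemma bdd_of_tendsto (u : ℕ → ℂ) (x : ℂ) (h : Tendsto u atTop (𝓝 x)) :
    ∃ K, 0 ≤ K ∧ ∀ n, ‖u n‖ ≤ K := by
  obtain ⟨K, hK⟩ := (Metric.isBounded_range_of_tendsto u h).exists_norm_le
  exact ⟨K, (norm_nonneg _).trans (hK _ ⟨0, rfl⟩), fun n => hK _ ⟨n, rfl⟩⟩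

lemma main_ne (q z : ℂ) (hq : q ≠ 0) (hq1 : ‖q‖ < 1) (hz : z ≠ 0) :
    ∑' k, JT q z k = qPochInf (q ^ 2) (q ^ 2) * qPochInf (-(q * z)) (q ^ 2) *
          qPochInf (-(q / z)) (q ^ 2) := by
  have hp : ‖q ^ 2‖ < 1 := by
    rw [norm_pow]; exact pow_lt_one₀ (norm_nonneg _) hq1 two_ne_zero
  have hfin := finite_jtp q z hq hz
  have hA := poch_tendsto (-(q * z)) (q ^ 2) hp
  have hB := poch_tendsto (-(q / z)) (q ^ 2) hp
  generalize hpq : q ^ 2 = p at *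
  have hP : Tendsto (JP p) atTop (𝓝 (qPochInf p p)) := poch_tendsto p p hp
  have hP0 := poch_ne p hp
  set L := qPochInf p p with hLdef
  have hPi : Tendsto (fun n => (JP p n)⁻¹) atTop (𝓝 L⁻¹) := hP.inv₀ hP0
  obtain ⟨K, hK0, hK⟩ := bdd_of_tendsto _ _ hP
  obtain ⟨M, hM0, hM⟩ := bdd_of_tendsto _ _ hPi
  have hBform : ∀ (n : ℕ) (k : ℤ), -(n : ℤ) ≤ k → k ≤ n → JB p (2 * n) (n + k).toNat =
      JP p (2 * n) * (JP p (n + k).toNat)⁻¹ * (JP p (n - k).toNat)⁻¹ := by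
    intro n k h1 h2
    have := JB_JP p (2 * n) (n + k).toNat (n - k).toNat (by omega)
    rw [← this]
    have := JP_ne p hp (n + k).toNat
    have := JP_ne p hp (n - k).toNat
    field_simp
  let f : ℕ → ℤ → ℂ := fun n k =>
    if k ∈ Finset.Icc (-(n : ℤ)) n then JB p (2 * n) (n + k).toNat * JT q z k else 0
  have hf : ∀ n, ∑' k, f n k =
      ∑ k ∈ Finset.range (2 * n + 1), JB p (2 * n) k * JT q z ((k : ℤ) - n) := by
    intro n
    rw [tsum_eq_sum (s := Finset.Icc (-(n : ℤ)) n) (fun k hk => if_neg hk)]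
    refine Finset.sum_bij' (fun k _ => (n + k).toNat) (fun j _ => (j : ℤ) - n) ?_ ?_ ?_ ?_ ?_
    · intro k hk; simp only [Finset.mem_Icc, Finset.mem_range] at *; omega
    · intro k hk; simp only [Finset.mem_Icc, Finset.mem_range] at *; omega
    · intro k hk; simp only [Finset.mem_Icc] at *; omega
    · intro k hk; simp only [Finset.mem_range] at *; omega
    · intro k hk
      simp only [f, if_pos hk]
      have : (((n + k).toNat : ℕ) : ℤ) - n = k := by
        simp only [Finset.mem_Icc] at *; omega
      rw [this]
  have hlim : Tendsto (fun n => ∑' k, f n k) atTop (𝓝 (∑' k, L⁻¹ * JT q z k)) := by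
    refine tendsto_tsum_of_dominated_convergence
      (bound := fun k => K * M * M * ‖JT q z k‖) ?_ ?_ ?_
    · exact (JT_summable q z hq hq1 hz).norm.mul_left _
    · intro k
      have t0 : Tendsto (fun n : ℕ => 2 * n) atTop atTop :=
        tendsto_atTop_mono (fun n => by simp only [id]; omega) tendsto_id
      have t1 : Tendsto (fun n : ℕ => ((n : ℤ) + k).toNat) atTop atTop := by
        refine tendsto_atTop.2 fun b => ?_
        filter_upwards [eventually_ge_atTop (b + k.natAbs)] with n hn
        omega
      have t2 : Tendsto (fun n : ℕ => ((n : ℤ) - k).toNat) atTop atTop := by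
        refine tendsto_atTop.2 fun b => ?_
        filter_upwards [eventually_ge_atTop (b + k.natAbs)] with n hn
        omega
      have h := (((hP.comp t0).mul (hPi.comp t1)).mul (hPi.comp t2)).mul_const (JT q z k)
      rw [mul_inv_cancel₀ hP0, one_mul] at h
      refine h.congr' ?_
      filter_upwards [eventually_ge_atTop k.natAbs] with n hn
      have h1 : -(n : ℤ) ≤ k := by omega
      have h2 : k ≤ n := by omega
      simp only [f, Finset.mem_Icc, h1, h2, and_self, if_true, hBform n k h1 h2,
        Function.comp_apply]
    · refine Eventually.of_forall fun n k => ?_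
      by_cases hk : k ∈ Finset.Icc (-(n : ℤ)) n
      · simp only [f, if_pos hk]
        rw [Finset.mem_Icc] at hk
        rw [hBform n k hk.1 hk.2, norm_mul, norm_mul, norm_mul]
        gcongr
        · exact hK _
        · exact hM _
        · exact hM _
      · simp only [f, if_neg hk, norm_zero]
        positivity
  have heq := tendsto_nhds_unique hlim ((hA.mul hB).congr fun n => by rw [hf, hfin])
  rw [tsum_mul_left] at heq
  rw [mul_assoc, ← heq, mul_inv_cancel_left₀ hP0]

/-- Jacobi's triple product identity: for `|q| < 1` and `z ≠ 0`,
`∑_{k=-∞}^∞ q^{k²} z^k = (q²;q²)_∞ (-qz;q²)_∞ (-q/z;q²)_∞`. -/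
theorem jacobi_triple_product (q z : ℂ) (hq : ‖q‖ < 1) (hz : z ≠ 0) :
    ∃ S₁ S₂ : ℂ,
      HasSum (fun n : ℕ => q ^ ((n : ℤ) ^ 2) * z ^ (n : ℤ)) S₁ ∧
      HasSum (fun n : ℕ => q ^ ((-(n + 1) : ℤ) ^ 2) * z ^ (-(n + 1) : ℤ)) S₂ ∧
      S₁ + S₂ =
        qPochInf (q ^ 2) (q ^ 2) * qPochInf (-(q * z)) (q ^ 2) *
          qPochInf (-(q / z)) (q ^ 2) := by
  by_cases h0 : q = 0
  · subst h0
    refine ⟨1, 0, ?_, ?_, ?_⟩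
    · have := hasSum_single (f := fun n : ℕ => (0 : ℂ) ^ ((n : ℤ) ^ 2) * z ^ (n : ℤ)) 0
        (fun n hn => by
          have : ((n : ℤ)) ^ 2 ≠ 0 := pow_ne_zero 2 (by exact_mod_cast hn)
          simp only [zero_zpow _ this, zero_mul])
      simpa using this
    · have : (fun n : ℕ => (0 : ℂ) ^ ((-(n + 1) : ℤ) ^ 2) * z ^ (-(n + 1) : ℤ)) = fun _ => 0 := by
        funext n
        have : (-(n + 1) : ℤ) ^ 2 ≠ 0 := pow_ne_zero 2 (by omega)
        rw [zero_zpow _ this, zero_mul]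
      rw [this]; exact hasSum_zero
    · simp [qPochInf]
  · have hs := JT_summable q z h0 hq hz
    have s1 : Summable (fun n : ℕ => JT q z n) := JT_summable_nat q z h0 hq hz
    have s2 : Summable (fun n : ℕ => JT q z (-(n + 1))) :=
      hs.comp_injective (i := fun n : ℕ => (-(n + 1) : ℤ)) (fun a b h => by
        simp only at h; omega)
    refine ⟨_, _, s1.hasSum, s2.hasSum, ?_⟩
    rw [← tsum_of_nat_of_neg_add_one s1 s2]
    exact main_ne q z h0 hq hz
end

section
/- (Product representation of the theta function ϑ₁) Let q be a complex number with |q| < 1, fix a branch q^{1/4} with (q^{1/4})⁴ = q, and let x be a real (or complex) number. Then 2 ∑_{n=0}^∞ (-1)^n q^{(n+1/2)²} sin((2n+1)x) = 2 q^{1/4} sin x ∏_{n=1}^∞ (1 - q^{2n})(1 - 2 q^{2n} cos 2x + q^{4n}), where q^{(n+1/2)²} means q^{1/4} · q^{n²+n}. -/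
noncomputable def tpP (q : ℂ) (m : ℕ) : ℂ := ∏ k ∈ Finset.range m, (1 - q ^ (2 * (k + 1)))

noncomputable def tpR (q : ℂ) (m : ℤ) : ℂ := if 0 ≤ m then (tpP q m.toNat)⁻¹ else 0

noncomputable def tpE (q : ℂ) (n : ℤ) : ℂ := (-1) ^ n * q ^ (n ^ 2 + n)

noncomputable def tpA (q : ℂ) (N : ℕ) (n : ℤ) : ℂ :=
  tpE q n * (tpP q (2 * N + 1) * tpR q (N - n) * tpR q (N + 1 + n))

lemma tp_fac_ne {q : ℂ} (hq : ‖q‖ < 1) (k : ℕ) : 1 - q ^ (2 * (k + 1)) ≠ 0 := by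
  intro h
  have h1 : ‖q ^ (2 * (k + 1))‖ < 1 := by
    rw [norm_pow]; exact pow_lt_one₀ (norm_nonneg _) hq (by omega)
  rw [← sub_eq_zero.mp h] at h1
  simp at h1

lemma tpP_ne {q : ℂ} (hq : ‖q‖ < 1) (m : ℕ) : tpP q m ≠ 0 :=
  Finset.prod_ne_zero_iff.mpr fun k _ => tp_fac_ne hq k

lemma tpR_pred {q : ℂ} (hq : ‖q‖ < 1) (m : ℤ) :
    tpR q m = (1 - q ^ (2 * (m + 1))) * tpR q (m + 1) := by
  rcases lt_trichotomy m (-1) with h | h | h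
  · simp [tpR, show ¬ (0 ≤ m) by omega, show ¬ (0 ≤ m + 1) by omega]
  · subst h; simp [tpR]
  · obtain ⟨k, rfl⟩ := Int.eq_ofNat_of_zero_le (show 0 ≤ m by omega)
    have h2 : ((k : ℤ) + 1).toNat = k + 1 := by omega
    have h3 : (2 * ((k : ℤ) + 1)) = ((2 * (k + 1) : ℕ) : ℤ) := by push_cast; ring
    have := tp_fac_ne hq k
    have := tpP_ne hq k
    simp only [tpR, h2, h3, zpow_natCast, Int.toNat_natCast]
    rw [if_pos (by omega), if_pos (by omega)]
    simp only [tpP, Finset.prod_range_succ]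
    simp only [tpP] at this
    field_simp

lemma tpE_succ {q : ℂ} (h0 : q ≠ 0) (n : ℤ) :
    tpE q (n + 1) = - tpE q n * (q ^ (2 * n) * q ^ 2) := by
  have : (n + 1) ^ 2 + (n + 1) = (n ^ 2 + n) + (2 * n + (2 : ℕ)) := by push_cast; ring
  unfold tpE
  rw [this, zpow_add₀ h0 (n ^ 2 + n), zpow_add₀ h0 (2 * n), zpow_natCast, zpow_add_one₀ (by norm_num)]
  ring

lemma tpE_pred {q : ℂ} (h0 : q ≠ 0) (n : ℤ) :
    tpE q (n - 1) = - tpE q n * (q ^ (2 * n))⁻¹ := by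
  have h := tpE_succ h0 (n - 1)
  have h2 : 2 * n = 2 * (n - 1) + (2 : ℕ) := by push_cast; ring
  rw [sub_add_cancel] at h
  rw [h, h2, zpow_add₀ h0, zpow_natCast]
  have := zpow_ne_zero (2 * (n - 1)) h0
  field_simp

lemma tpA_rec {q : ℂ} (hq : ‖q‖ < 1) (h0 : q ≠ 0) (N : ℕ) (n : ℤ) :
    tpA q (N + 1) n = (1 + q ^ (4 * (N + 1))) * tpA q N n
      - q ^ (2 * (N + 1)) * (tpA q N (n - 1) + tpA q N (n + 1)) := by
  have hP : tpP q (2 * (N + 1) + 1) = tpP q (2 * N + 1) * (1 - q ^ (4 * N + 4)) * (1 - q ^ (4 * N + 6)) := by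
    rw [show 2 * (N + 1) + 1 = (2 * N + 1) + 1 + 1 by ring]
    simp only [tpP, Finset.prod_range_succ]
    ring
  have e1 := tpR_pred hq (N - n)
  have e2 := tpR_pred hq (N - n - 1)
  have e3 := tpR_pred hq (N + 1 + n)
  have e4 := tpR_pred hq (N + n)
  unfold tpA
  rw [tpE_succ h0, tpE_pred h0, hP]
  rw [show ((N + 1 : ℕ) : ℤ) - n = N - n + 1 by push_cast; ring,
    show ((N + 1 : ℕ) : ℤ) + 1 + n = N + 1 + n + 1 by push_cast; ring,
    show (N : ℤ) - (n - 1) = N - n + 1 by ring, show (N : ℤ) + 1 + (n - 1) = N + n by ring,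
    show (N : ℤ) - (n + 1) = N - n - 1 by ring, show (N : ℤ) + 1 + (n + 1) = N + 1 + n + 1 by ring]
  rw [show (N : ℤ) + n + 1 = N + 1 + n by ring] at e4
  rw [sub_add_cancel] at e2
  rw [e4, e2, e1, e3]
  rw [show 2 * ((N : ℤ) - n + 1) = (2 * N : ℕ) + (2 : ℕ) - 2 * n by push_cast; ring,
    show 2 * ((N : ℤ) - n) = (2 * N : ℕ) - 2 * n by push_cast; ring,
    show 2 * ((N : ℤ) + 1 + n + 1) = (2 * N : ℕ) + (4 : ℕ) + 2 * n by push_cast; ring,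
    show 2 * ((N : ℤ) + 1 + n) = (2 * N : ℕ) + (2 : ℕ) + 2 * n by push_cast; ring]
  simp only [zpow_add₀ h0, zpow_sub₀ h0, zpow_natCast]
  have hu := zpow_ne_zero (2 * n) h0
  generalize q ^ (2 * n) = u at *
  generalize tpR q (N - n + 1) = r1
  generalize tpR q (N + 1 + n + 1) = r2
  field_simp
  ring

lemma tpA_zero_of_lt (q : ℂ) (N : ℕ) (n : ℤ) (h : (N : ℤ) < n) : tpA q N n = 0 := by
  simp [tpA, tpR, show n ≤ N ↔ False by simp; omega]

lemma tpA_neg_one {q : ℂ} (N : ℕ) : tpA q N (-1) = - tpA q N 0 := by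
  simp [tpA, tpE]; ring

lemma tp_abel (a s : ℤ → ℂ) (ha : a (-1) = - a 0) (hs : s (-1) = - s 0) (M : ℕ) :
    ∑ n ∈ Finset.range M, a n * (s (n + 1) + s (n - 1)) =
    ∑ n ∈ Finset.range M, (a (n - 1) + a (n + 1)) * s n + (a (M - 1) * s M - a M * s (M - 1)) := by
  induction M with
  | zero => simp [ha, hs]
  | succ M ih =>
    rw [Finset.sum_range_succ, Finset.sum_range_succ, ih]
    push_cast
    rw [show (M : ℤ) + 1 - 1 = M by ring]
    ring

noncomputable def tpS (x : ℂ) (n : ℤ) : ℂ := Complex.sin ((2 * (n : ℂ) + 1) * x)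

lemma tpS_rec (x : ℂ) (n : ℤ) : 2 * Complex.cos (2 * x) * tpS x n = tpS x (n + 1) + tpS x (n - 1) := by
  unfold tpS
  push_cast
  rw [show (2 * ((n : ℂ) + 1) + 1) * x = (2 * n + 1) * x + 2 * x by ring,
    show (2 * ((n : ℂ) - 1) + 1) * x = (2 * n + 1) * x - 2 * x by ring,
    Complex.sin_add, Complex.sin_sub]
  ring

lemma tp_finite {q : ℂ} (hq : ‖q‖ < 1) (h0 : q ≠ 0) (x : ℂ) (N : ℕ) : ∀ M : ℕ, N < M →
    ∑ n ∈ Finset.range M, tpA q N n * tpS x n = Complex.sin x * ∏ k ∈ Finset.range N,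
      (1 - 2 * q ^ (2 * (k + 1)) * Complex.cos (2 * x) + q ^ (4 * (k + 1))) := by
  induction N with
  | zero =>
    intro M hM
    obtain ⟨M, rfl⟩ := Nat.exists_eq_add_of_lt hM
    rw [Finset.sum_eq_single 0]
    · have := tp_fac_ne hq 0
      simp [tpA, tpE, tpS, tpR, tpP] at *
      field_simp
    · intro b _ hb
      rw [tpA_zero_of_lt _ _ _ (by omega), zero_mul]
    · simp
  | succ N ih =>
    intro M hM
    have hi := ih M (by omega)
    have hab := tp_abel (tpA q N) (tpS x) (tpA_neg_one N)
      (by simp [tpS, show -2 + 1 = (-1 : ℂ) by norm_num]) M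
    rw [tpA_zero_of_lt q N (M - 1) (by omega), tpA_zero_of_lt q N M (by omega)] at hab
    rw [Finset.prod_range_succ, ← mul_assoc, ← hi]
    have h1 : ∑ n ∈ Finset.range M, tpA q N n * (tpS x (n + 1) + tpS x (n - 1)) =
        2 * Complex.cos (2 * x) * ∑ n ∈ Finset.range M, tpA q N n * tpS x n := by
      rw [Finset.mul_sum]
      refine Finset.sum_congr rfl fun n _ => ?_
      rw [← tpS_rec]; ring
    have h2 : ∑ n ∈ Finset.range M, tpA q (N + 1) n * tpS x n =
      (1 + q ^ (4 * (N + 1))) * ∑ n ∈ Finset.range M, tpA q N n * tpS x n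
      - q ^ (2 * (N + 1)) * ∑ n ∈ Finset.range M, (tpA q N (n - 1) + tpA q N (n + 1)) * tpS x n := by
      rw [Finset.mul_sum, Finset.mul_sum, ← Finset.sum_sub_distrib]
      refine Finset.sum_congr rfl fun n _ => ?_
      rw [tpA_rec hq h0]; ring
    rw [h2]
    rw [h1] at hab
    linear_combination q ^ (2 * (N + 1)) * hab

lemma tp_sum_norm {q : ℂ} (hq : ‖q‖ < 1) : Summable fun k : ℕ => ‖-q ^ (2 * (k + 1))‖ := by
  have h : Summable fun k : ℕ => ‖q‖ ^ k := summable_geometric_of_lt_one (norm_nonneg _) hq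
  refine Summable.of_nonneg_of_le (fun _ => norm_nonneg _) (fun k => ?_) h
  rw [norm_neg, norm_pow]
  exact pow_le_pow_of_le_one (norm_nonneg _) hq.le (by omega)

lemma tp_sum_norm2 {q : ℂ} (hq : ‖q‖ < 1) (c : ℂ) :
    Summable fun k : ℕ => ‖-2 * q ^ (2 * (k + 1)) * c + q ^ (4 * (k + 1))‖ := by
  have h : Summable fun k : ℕ => (2 * ‖c‖ + 1) * ‖q‖ ^ k :=
    (summable_geometric_of_lt_one (norm_nonneg _) hq).mul_left _
  refine Summable.of_nonneg_of_le (fun _ => norm_nonneg _) (fun k => ?_) h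
  refine (norm_add_le _ _).trans ?_
  simp only [norm_mul, norm_neg, norm_pow, Complex.norm_ofNat]
  have h1 : ‖q‖ ^ (2 * (k + 1)) ≤ ‖q‖ ^ k := pow_le_pow_of_le_one (norm_nonneg _) hq.le (by omega)
  have h2 : ‖q‖ ^ (4 * (k + 1)) ≤ ‖q‖ ^ k := pow_le_pow_of_le_one (norm_nonneg _) hq.le (by omega)
  nlinarith [norm_nonneg c]

lemma tp_mul1 {q : ℂ} (hq : ‖q‖ < 1) : Multipliable fun k : ℕ => (1 - q ^ (2 * (k + 1))) := by
  simpa [sub_eq_add_neg] using multipliable_one_add_of_summable (tp_sum_norm hq)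

lemma tp_mul2 {q : ℂ} (hq : ‖q‖ < 1) (c : ℂ) :
    Multipliable fun k : ℕ => (1 - 2 * q ^ (2 * (k + 1)) * c + q ^ (4 * (k + 1))) := by
  refine (multipliable_one_add_of_summable (tp_sum_norm2 hq c)).congr fun k => ?_
  ring

lemma tp_inf_ne {q : ℂ} (hq : ‖q‖ < 1) : ∏' k : ℕ, (1 - q ^ (2 * (k + 1))) ≠ 0 := by
  have := tprod_one_add_ne_zero_of_summable (f := fun k : ℕ => -q ^ (2 * (k + 1)))
    (fun k => by simpa [sub_eq_add_neg] using tp_fac_ne hq k) (tp_sum_norm hq)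
  simpa [sub_eq_add_neg] using this

open Filter Topology in
lemma tpP_tendsto {q : ℂ} (hq : ‖q‖ < 1) :
    Tendsto (tpP q) atTop (𝓝 (∏' k : ℕ, (1 - q ^ (2 * (k + 1))))) :=
  (tp_mul1 hq).tendsto_prod_tprod_nat

open Filter Topology in
lemma tpR_tendsto {q : ℂ} (hq : ‖q‖ < 1) (f : ℕ → ℤ) (c : ℤ) (hf : ∀ n, f n = n + c) :
    Tendsto (fun n => tpR q (f n)) atTop (𝓝 (∏' k : ℕ, (1 - q ^ (2 * (k + 1))))⁻¹) := by
  have h1 : Tendsto (fun n => (f n).toNat) atTop atTop := by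
    refine tendsto_atTop.mpr fun b => ?_
    filter_upwards [eventually_ge_atTop (b + c.natAbs)] with n hn
    have := hf n
    omega
  refine (((tpP_tendsto hq).comp h1).inv₀ (tp_inf_ne hq)).congr' ?_
  filter_upwards [eventually_ge_atTop c.natAbs] with n hn
  have := hf n
  simp only [tpR, Function.comp]
  rw [if_pos (by omega)]

lemma tpP_bdd {q : ℂ} (hq : ‖q‖ < 1) : ∃ C : ℝ, ∀ m, ‖tpP q m‖ ≤ C := by
  obtain ⟨C, hC⟩ := (tpP_tendsto hq).norm.bddAbove_range
  exact ⟨C, fun m => hC ⟨m, rfl⟩⟩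

lemma tpR_bdd {q : ℂ} (hq : ‖q‖ < 1) : ∃ C : ℝ, 0 ≤ C ∧ ∀ m, ‖tpR q m‖ ≤ C := by
  obtain ⟨C, hC⟩ := ((tpP_tendsto hq).inv₀ (tp_inf_ne hq)).norm.bddAbove_range
  have h0 : 0 ≤ C := (norm_nonneg _).trans (hC ⟨0, rfl⟩)
  refine ⟨C, h0, fun m => ?_⟩
  unfold tpR
  split_ifs
  · exact hC ⟨_, rfl⟩
  · simpa using h0

lemma tpS_norm (x : ℂ) (n : ℕ) : ‖tpS x n‖ ≤ Real.exp ‖x‖ * Real.exp (2 * ‖x‖) ^ n := by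
  have key : ∀ z : ℂ, ‖Complex.sin z‖ ≤ Real.exp ‖z‖ := by
    intro z
    have h1 := Complex.norm_exp_le_exp_norm (-z * Complex.I)
    have h2 := Complex.norm_exp_le_exp_norm (z * Complex.I)
    have h3 := norm_sub_le (Complex.exp (-z * Complex.I)) (Complex.exp (z * Complex.I))
    simp only [norm_mul, norm_neg, Complex.norm_I, mul_one] at h1 h2
    rw [Complex.sin]
    simp only [norm_mul, norm_div, Complex.norm_I, mul_one, Complex.norm_ofNat]
    linarith
  refine (key _).trans ?_
  rw [← Real.exp_nat_mul, ← Real.exp_add]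
  refine Real.exp_le_exp.mpr ?_
  rw [norm_mul]
  have : ‖(2 * ((n : ℤ) : ℂ) + 1)‖ ≤ 2 * n + 1 := by
    refine (norm_add_le _ _).trans ?_
    simp
  nlinarith [norm_nonneg x]

open Filter Topology in
lemma tp_bound_summable {r K : ℝ} (h0 : 0 < r) (h1 : r < 1) (hK : 0 < K) :
    Summable fun n : ℕ => r ^ (n ^ 2 + n) * K ^ n := by
  refine summable_of_ratio_test_tendsto_lt_one (l := 0) one_pos
    (Eventually.of_forall fun n => by positivity) ?_
  have h2 : Tendsto (fun n : ℕ => (r ^ n) * (r ^ n) * (r ^ 2 * K)) atTop (𝓝 (0 * 0 * (r ^ 2 * K))) := by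
    have := tendsto_pow_atTop_nhds_zero_of_lt_one h0.le h1
    exact (this.mul this).mul_const _
  simp only [zero_mul] at h2
  refine h2.congr fun n => ?_
  rw [Real.norm_of_nonneg (by positivity), Real.norm_of_nonneg (by positivity), eq_div_iff (by positivity)]
  ring

lemma tpE_nat (q : ℂ) (n : ℕ) : tpE q n = (-1) ^ n * q ^ (n ^ 2 + n) := by
  unfold tpE
  rw [show ((n : ℤ) ^ 2 + n) = ((n ^ 2 + n : ℕ) : ℤ) by push_cast; ring, zpow_natCast, zpow_natCast]

open Filter Topology in
lemma tp_main {q : ℂ} (hq : ‖q‖ < 1) (h0 : q ≠ 0) (x : ℂ) :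
    HasSum (fun n : ℕ => tpE q n * tpS x n) (Complex.sin x *
        ∏' n : ℕ,
          ((1 - q ^ (2 * (n + 1))) *
            (1 - 2 * q ^ (2 * (n + 1)) * Complex.cos (2 * x) + q ^ (4 * (n + 1))))) := by
  rw [(tp_mul1 hq).tprod_mul (tp_mul2 hq _)]
  have hT := tpP_tendsto hq
  have hne := tp_inf_ne hq
  have hRt := tpR_tendsto hq
  set Q := ∏' k : ℕ, (1 - q ^ (2 * (k + 1)))
  obtain ⟨C, hC⟩ := tpP_bdd hq
  obtain ⟨D, hD0, hD⟩ := tpR_bdd hq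
  have hC0 : 0 ≤ C := (norm_nonneg _).trans (hC 0)
  have hr : 0 < ‖q‖ := norm_pos_iff.mpr h0
  have hsum := (tp_bound_summable hr hq (Real.exp_pos (2 * ‖x‖)))
  have hEb : ∀ n : ℕ, ‖tpE q n * tpS x n‖ ≤
      Real.exp ‖x‖ * (‖q‖ ^ (n ^ 2 + n) * Real.exp (2 * ‖x‖) ^ n) := by
    intro n
    rw [norm_mul, tpE_nat]
    simp only [norm_mul, norm_pow, norm_neg, norm_one, one_pow, one_mul]
    calc _ ≤ ‖q‖ ^ (n ^ 2 + n) * (Real.exp ‖x‖ * Real.exp (2 * ‖x‖) ^ n) := by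
          gcongr; exact tpS_norm x n
      _ = _ := by ring
  have hS : Summable (fun n : ℕ => tpE q n * tpS x n) :=
    Summable.of_norm_bounded (hsum.mul_left _) hEb
  have hlim : Tendsto (fun N : ℕ => ∑' n : ℕ, Q * (tpA q N n * tpS x n)) atTop
      (𝓝 (∑' n : ℕ, tpE q n * tpS x n)) := by
    refine tendsto_tsum_of_dominated_convergence
      (bound := fun n => (‖Q‖ * (C * D * D)) * (Real.exp ‖x‖ * (‖q‖ ^ (n ^ 2 + n) * Real.exp (2 * ‖x‖) ^ n)))
      ((hsum.mul_left _).mul_left _) ?_ ?_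
    · intro n
      have t1 : Tendsto (fun N : ℕ => tpP q (2 * N + 1)) atTop (𝓝 Q) :=
        hT.comp (tendsto_atTop_mono (fun N => by simp; omega) tendsto_id)
      have t2 := hRt (fun N : ℕ => (N : ℤ) - n) (-n) (fun _ => by ring)
      have t3 := hRt (fun N : ℕ => (N : ℤ) + 1 + n) (1 + n) (fun _ => by ring)
      have t := (((t1.mul t2).mul t3).mul_const (Q * (tpE q n * tpS x n)))
      have e : Q * Q⁻¹ * Q⁻¹ * (Q * (tpE q n * tpS x n)) = tpE q n * tpS x n := by
        field_simp
      rw [e] at t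
      refine t.congr fun N => ?_
      unfold tpA; ring
    · refine Eventually.of_forall fun N n => ?_
      have : Q * (tpA q N n * tpS x n) = (Q * (tpP q (2 * N + 1) * tpR q (N - n) * tpR q (N + 1 + n))) *
          (tpE q n * tpS x n) := by unfold tpA; ring
      rw [this, norm_mul, norm_mul, norm_mul, norm_mul]
      gcongr
      · exact hC _
      · exact hD _
      · exact hD _
      · exact hEb n
  have hfin : ∀ N : ℕ, ∑' n : ℕ, Q * (tpA q N n * tpS x n) = Q * (Complex.sin x * ∏ k ∈ Finset.range N,
      (1 - 2 * q ^ (2 * (k + 1)) * Complex.cos (2 * x) + q ^ (4 * (k + 1)))) := by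
    intro N
    rw [tsum_eq_sum (s := Finset.range (N + 1)), ← Finset.mul_sum, tp_finite hq h0 x N _ (by omega)]
    intro n hn
    rw [tpA_zero_of_lt _ _ _ (by simp at hn; omega)]; ring
  simp only [hfin] at hlim
  have hlim2 := (((tp_mul2 hq (Complex.cos (2 * x))).tendsto_prod_tprod_nat).const_mul (Complex.sin x)).const_mul Q
  have := tendsto_nhds_unique hlim hlim2
  have h := hS.hasSum
  rw [this] at h
  convert h using 1
  ring

/-- Product representation of the theta function `ϑ₁`: for `|q| < 1`, a fixed fourth
root `q4` of `q` (so `q^{(n+1/2)²} = q4 · q^{n²+n}`), and any complex `x`,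
`2 ∑_{n=0}^∞ (-1)^n q^{(n+1/2)²} sin((2n+1)x)
  = 2 q^{1/4} sin x ∏_{n=1}^∞ (1-q^{2n})(1 - 2q^{2n} cos 2x + q^{4n})`. -/
theorem theta1_product (q q4 x : ℂ) (hq : ‖q‖ < 1) (hq4 : q4 ^ 4 = q) :
    HasSum
      (fun n : ℕ => 2 * (-1) ^ n * (q4 * q ^ (n ^ 2 + n)) *
        Complex.sin ((2 * (n : ℂ) + 1) * x))
      (2 * q4 * Complex.sin x *
        ∏' n : ℕ,
          ((1 - q ^ (2 * (n + 1))) *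
            (1 - 2 * q ^ (2 * (n + 1)) * Complex.cos (2 * x) + q ^ (4 * (n + 1))))) := by
  by_cases h0 : q = 0
  · have h4 : q4 = 0 := by
      rw [h0] at hq4
      exact pow_eq_zero_iff (by norm_num) |>.mp hq4
    simp [h4, hasSum_zero]
  · have h := (tp_main hq h0 x).mul_left (2 * q4)
    rw [← mul_assoc] at h
    have e : (fun n : ℕ => 2 * (-1) ^ n * (q4 * q ^ (n ^ 2 + n)) *
        Complex.sin ((2 * (n : ℂ) + 1) * x)) = fun n : ℕ => 2 * q4 * (tpE q n * tpS x n) := by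
      funext n
      rw [tpE_nat]
      simp only [tpS, Int.cast_natCast]
      ring
    rw [e]
    exact h
end

section
/- (Limit of the q-gamma function) For every complex number z that is not a nonpositive integer, lim_{q→1⁻} Γ_q(z) = Γ(z), where the limit is taken over real q increasing to 1 and Γ is the classical gamma function. -/
/-- The q-gamma function for real `0 < q < 1` and complex `z`:
`Γ_q(z) = ((q;q)_∞/(q^z;q)_∞)(1-q)^{1-z}`, with `q^z = exp(z log q)` and
`(1-q)^{1-z} = exp((1-z) log(1-q))` using the real logarithms. -/
noncomputable def qGamma (q : ℝ) (z : ℂ) : ℂ :=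
  qPochInf (q : ℂ) (q : ℂ) / qPochInf (Complex.exp (z * (Real.log q : ℂ))) (q : ℂ) *
    Complex.exp ((1 - z) * (Real.log (1 - q) : ℂ))

open Filter Topology

lemma qg_alg (z α δ : ℂ) (γ β m A B : ℝ) (hm : 1 ≤ m) (hA : 0 ≤ A) (hB : 0 ≤ B)
    (h1 : ‖α - z * γ‖ ≤ A / m^2) (hγ0 : 0 ≤ γ) (hγ : γ ≤ 1 / m) (hβ0 : 0 ≤ β) (hβ : β ≤ 1 / m)
    (hγβ : γ - β = γ * β) (h2 : ‖δ + z * β‖ ≤ B / m^2) :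
    ‖(1 + α) * (1 + δ) - 1‖ ≤ (A + ‖z‖ + B + (A + ‖z‖) * (B + ‖z‖)) / m^2 := by
  have hm0 : 0 < m := by linarith
  have hmm : 1 / m^2 ≤ 1 / m := by
    apply one_div_le_one_div_of_le hm0; nlinarith
  have e1 : ‖z * (γ:ℂ)‖ ≤ ‖z‖ / m := by
    rw [norm_mul, Complex.norm_real, Real.norm_of_nonneg hγ0, div_eq_mul_one_div]
    gcongr
  have e2 : ‖z * (β:ℂ)‖ ≤ ‖z‖ / m := by
    rw [norm_mul, Complex.norm_real, Real.norm_of_nonneg hβ0, div_eq_mul_one_div]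
    gcongr
  have e3 : ‖z * ((γ:ℂ) * β)‖ ≤ ‖z‖ / m^2 := by
    rw [norm_mul, norm_mul, Complex.norm_real, Complex.norm_real, Real.norm_of_nonneg hβ0,
      Real.norm_of_nonneg hγ0]
    have : γ * β ≤ 1 / m * (1 / m) := by gcongr
    calc ‖z‖ * (γ * β) ≤ ‖z‖ * (1 / m * (1 / m)) := by gcongr
      _ = _ := by field_simp
  have e4 : ‖α‖ ≤ (A + ‖z‖) / m := by
    have : α = (α - z * γ) + z * γ := by ring
    rw [this]
    refine (norm_add_le _ _).trans ?_
    have : A / m^2 ≤ A / m := by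
      rw [div_eq_mul_one_div, div_eq_mul_one_div A m]; gcongr
    rw [add_div]; linarith
  have e5 : ‖δ‖ ≤ (B + ‖z‖) / m := by
    have : δ = (δ + z * β) - z * β := by ring
    rw [this]
    refine (norm_sub_le _ _).trans ?_
    have : B / m^2 ≤ B / m := by
      rw [div_eq_mul_one_div, div_eq_mul_one_div B m]; gcongr
    rw [add_div]; linarith
  have e6 : ‖α * δ‖ ≤ (A + ‖z‖) * (B + ‖z‖) / m^2 := by
    rw [norm_mul]
    calc ‖α‖ * ‖δ‖ ≤ ((A + ‖z‖) / m) * ((B + ‖z‖) / m) := by gcongr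
      _ = _ := by field_simp
  have hc : (γ:ℂ) - β = γ * β := by exact_mod_cast hγβ
  have key : (1 + α) * (1 + δ) - 1 = (α - z * γ) + z * (γ * β) + (δ + z * β) + α * δ := by
    rw [← hc]; ring
  rw [key]
  refine (norm_add_le _ _).trans ?_
  refine (add_le_add_left norm_add₃_le _).trans ?_
  simp only [add_div]
  linarith

lemma qg_exp2 (w : ℂ) : ‖Complex.exp w - 1 - w‖ ≤ ‖w‖^2 * Real.exp ‖w‖ := by
  have := Complex.norm_exp_sub_sum_le_norm_mul_exp w 2
  simpa [Finset.sum_range_succ, sub_sub] using this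

lemma qg_delta (z : ℂ) (β : ℝ) (hβ0 : 0 ≤ β) (hβ : β ≤ 1 / 2) :
    ‖(Complex.exp (z * (Real.log (1 - β) : ℝ)) - 1) + z * β‖ ≤
      (4 * ‖z‖^2 * Real.exp ‖z‖ + 2 * ‖z‖) * β^2 := by
  have hp : 0 < 1 - β := by linarith
  set L := Real.log (1 - β) with hL
  have h1 : L ≤ -β := by have := Real.log_le_sub_one_of_pos hp; linarith
  have h2 : -β - 2 * β^2 ≤ L := by
    have := Real.one_sub_inv_le_log_of_pos hp
    have h3 : (1 - β)⁻¹ ≤ 1 + β + 2 * β^2 := by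
      rw [inv_le_iff_one_le_mul₀ hp]; nlinarith [mul_nonneg (sq_nonneg β) (by linarith : 0 ≤ 1 - 2 * β)]
    linarith
  have h3 : |L| ≤ 2 * β := by rw [abs_le]; constructor <;> nlinarith
  have h4 : |L + β| ≤ 2 * β^2 := by rw [abs_le]; constructor <;> nlinarith
  have e := qg_exp2 (z * (L : ℝ))
  have hn : ‖z * (L:ℂ)‖ ≤ ‖z‖ * (2 * β) := by
    rw [norm_mul, Complex.norm_real]; gcongr; exact h3
  have hn1 : ‖z * (L:ℂ)‖ ≤ ‖z‖ := hn.trans (by nlinarith [norm_nonneg z])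
  have key : (Complex.exp (z * (L : ℝ)) - 1) + z * β
    = (Complex.exp (z * (L : ℝ)) - 1 - z * L) + z * ((L + β : ℝ) : ℂ) := by push_cast; ring
  rw [key]
  refine (norm_add_le _ _).trans ?_
  have e2 : ‖z * ((L + β : ℝ) : ℂ)‖ ≤ ‖z‖ * (2 * β^2) := by
    rw [norm_mul, Complex.norm_real]; gcongr; exact h4
  have e3 : ‖z * (L:ℂ)‖^2 * Real.exp ‖z * (L:ℂ)‖ ≤ (‖z‖ * (2 * β))^2 * Real.exp ‖z‖ := by gcongr
  nlinarith

noncomputable def qgF (z : ℂ) (q : ℝ) (k : ℕ) : ℂ :=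
  (1 - Complex.exp (z * (Real.log q : ℂ)) * (q:ℂ)^(k+1)) / (1 - (q:ℂ)^(k+1)) *
    Complex.exp (z * (Real.log ((1 - q^(k+1)) / (1 - q^(k+2))) : ℝ))

noncomputable def qgC (z : ℂ) : ℝ :=
  let A := 2 * (‖z‖^2 * Real.exp ‖z‖ + ‖z‖)
  let B := 4 * ‖z‖^2 * Real.exp ‖z‖ + 2 * ‖z‖
  A + ‖z‖ + B + (A + ‖z‖) * (B + ‖z‖)

lemma qg_bound (z : ℂ) (t : ℝ) (ht : 0 < t) (ht1 : t ≤ 1) (k : ℕ) :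
    ‖qgF z (Real.exp (-t)) k - 1‖ ≤ qgC z / ((k:ℝ) + 1)^2 := by
  set q := Real.exp (-t) with hq
  set m : ℝ := (k:ℝ) + 1 with hmdef
  have hm : 1 ≤ m := by simp [m]
  have hm0 : 0 < m := by linarith
  set x := m * t with hx
  have hx0 : 0 < x := by positivity
  set u := q^(k+1) with hu
  have huexp : u = Real.exp (-x) := by
    rw [hu, hq, ← Real.exp_nat_mul]; congr 1; push_cast; rw [hx, hmdef]; ring
  have hq0 : 0 < q := Real.exp_pos _
  have hq1 : q < 1 := by rw [hq, Real.exp_lt_one_iff]; linarith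
  have hqt : 1 - q ≤ t := by have := Real.add_one_le_exp (-t); linarith
  have hu0 : 0 < u := by positivity
  have hu1 : u < 1 := pow_lt_one₀ hq0.le hq1 (by omega)
  have huv : u * Real.exp x = 1 := by rw [huexp, ← Real.exp_add]; simp
  have hex := Real.quadratic_le_exp_of_nonneg hx0.le
  have hr1 : u / (1 - u) ≤ 1 / x := by
    rw [div_le_div_iff₀ (by linarith) hx0]
    nlinarith [mul_le_mul_of_nonneg_left hex hu0.le, mul_pos hu0 (pow_pos hx0 2)]
  have hr2 : u / (1 - u) ≤ 2 / x^2 := by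
    rw [div_le_div_iff₀ (by linarith) (by positivity)]
    nlinarith [mul_le_mul_of_nonneg_left hex hu0.le, mul_pos hu0 hx0]
  have hr0 : 0 < u / (1 - u) := div_pos hu0 (by linarith)
  have huq : u * q < u := by nlinarith
  have hq2 : q^(k+2) = u * q := by rw [hu]; ring
  set γ := (1 - q) * (u / (1 - u)) with hγ
  set β := (1 - q) * u / (1 - u * q) with hβ
  have h1u : 1 - u ≠ 0 := by linarith
  have h1uq : 1 - u * q ≠ 0 := by linarith
  have hγ0 : 0 ≤ γ := mul_nonneg (by linarith) hr0.le
  have hβ0 : 0 ≤ β := div_nonneg (mul_nonneg (by linarith) hu0.le) (by linarith)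
  have hγm : γ ≤ 1 / m := by
    calc γ ≤ t * (1 / x) := by rw [hγ]; gcongr
      _ = 1 / m := by rw [hx]; field_simp
  have hγβ : γ - β = γ * β := by
    rw [hγ, hβ, mul_div_assoc', div_sub_div _ _ h1u h1uq, div_mul_div_comm]; congr 1; ring
  have hβγ : β * (1 + γ) = γ := by linarith
  have hβm : β ≤ 1 / m := by nlinarith
  have hβ2 : β ≤ 1 / 2 := by
    have : γ ≤ 1 := hγm.trans (by rw [div_le_one hm0]; exact hm)
    nlinarith
  have hlogβ : (1 - u) / (1 - q^(k+2)) = 1 - β := by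
    rw [hq2, hβ]; field_simp; ring
  set w := Complex.exp (z * (Real.log q : ℂ)) with hw
  have hlq : Real.log q = -t := by rw [hq, Real.log_exp]
  set α : ℂ := (1 - w) * ((u / (1 - u) : ℝ) : ℂ) with hα
  have hcu : (1 - (u:ℂ)) ≠ 0 := by exact_mod_cast h1u
  have hF : qgF z q k = (1 + α) * (1 + (Complex.exp (z * (Real.log (1 - β) : ℝ)) - 1)) := by
    rw [qgF, ← hu, hlogβ, hα, ← hw]
    have : (q:ℂ)^(k+1) = (u:ℂ) := by rw [hu]; push_cast; rfl
    rw [this]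
    congr 1
    · push_cast; field_simp; ring
    · ring
  rw [hF]
  have h1 : ‖α - z * γ‖ ≤ (2 * (‖z‖^2 * Real.exp ‖z‖ + ‖z‖)) / m^2 := by
    have : α - z * γ = (-(w - 1 - z * ((-t : ℝ):ℂ)) + z * ((t - (1 - q) : ℝ) : ℂ)) * ((u / (1 - u) : ℝ) : ℂ) := by
      rw [hα, hγ]; push_cast; ring
    rw [this, norm_mul, Complex.norm_real, Real.norm_of_nonneg hr0.le]
    have a1 : ‖w - 1 - z * ((-t : ℝ):ℂ)‖ ≤ ‖z‖^2 * Real.exp ‖z‖ * t^2 := by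
      rw [hw, hlq]
      refine (qg_exp2 _).trans ?_
      have : ‖z * ((-t : ℝ):ℂ)‖ = ‖z‖ * t := by
        rw [norm_mul, Complex.norm_real, norm_neg, Real.norm_of_nonneg ht.le]
      rw [this]
      calc (‖z‖ * t)^2 * Real.exp (‖z‖ * t) ≤ (‖z‖ * t)^2 * Real.exp ‖z‖ := by
            gcongr; nlinarith [norm_nonneg z]
        _ = _ := by ring
    have a2 : ‖z * ((t - (1 - q) : ℝ) : ℂ)‖ ≤ ‖z‖ * t^2 := by
      rw [norm_mul, Complex.norm_real]
      gcongr
      have := Real.abs_exp_sub_one_sub_id_le (x := -t) (by rw [abs_neg, abs_of_pos ht]; exact ht1)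
      rw [Real.norm_eq_abs, hq]
      rw [neg_sq] at this
      rwa [show t - (1 - Real.exp (-t)) = Real.exp (-t) - 1 - -t by ring]
    have a3 : ‖-(w - 1 - z * ((-t : ℝ):ℂ)) + z * ((t - (1 - q) : ℝ) : ℂ)‖ ≤
        (‖z‖^2 * Real.exp ‖z‖ + ‖z‖) * t^2 := by
      refine (norm_add_le _ _).trans ?_
      rw [norm_neg]; linarith
    calc _ ≤ ((‖z‖^2 * Real.exp ‖z‖ + ‖z‖) * t^2) * (2 / x^2) := by gcongr
      _ = _ := by rw [hx]; field_simp
  have h2 := qg_delta z β hβ0 hβ2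
  refine qg_alg z α _ γ β m _ (4 * ‖z‖^2 * Real.exp ‖z‖ + 2 * ‖z‖) hm (by positivity) (by positivity) h1 hγ0 hγm hβ0 hβm hγβ (h2.trans ?_)
  calc _ ≤ (4 * ‖z‖^2 * Real.exp ‖z‖ + 2 * ‖z‖) * (1 / m)^2 := by gcongr
    _ = _ := by field_simp

lemma qg_summable (C : ℝ) : Summable (fun k : ℕ => C / ((k:ℝ) + 1)^2) := by
  have := (summable_nat_add_iff 1).mpr (Real.summable_one_div_nat_pow (p := 2) |>.mpr (by norm_num))
  simpa [div_eq_mul_inv] using this.mul_left C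

lemma qg_mult (z : ℂ) (t : ℝ) (ht : 0 < t) (ht1 : t ≤ 1) :
    Multipliable (qgF z (Real.exp (-t))) := by
  have : Summable (fun k => ‖qgF z (Real.exp (-t)) k - 1‖) :=
    Summable.of_nonneg_of_le (fun _ => norm_nonneg _) (qg_bound z t ht ht1) (qg_summable _)
  simpa using multipliable_one_add_of_summable this

lemma qg_pochsum (a : ℂ) (q : ℝ) (h0 : 0 < q) (h1 : q < 1) :
    Summable (fun k : ℕ => ‖-(a * (q:ℂ)^k)‖) := by
  have := (summable_geometric_of_lt_one h0.le h1).mul_left ‖a‖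
  simpa [abs_of_pos h0] using this

lemma qg_pochmult (a : ℂ) (q : ℝ) (h0 : 0 < q) (h1 : q < 1) :
    Multipliable (fun k : ℕ => 1 - a * (q:ℂ)^k) := by
  simpa [sub_eq_add_neg] using multipliable_one_add_of_summable (qg_pochsum a q h0 h1)

lemma qg_poch_tendsto (a : ℂ) (q : ℝ) (h0 : 0 < q) (h1 : q < 1) :
    Tendsto (fun n => ∏ k ∈ Finset.range n, (1 - a * (q:ℂ)^k)) atTop (𝓝 (qPochInf a q)) :=
  (qg_pochmult a q h0 h1).tendsto_prod_tprod_nat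

lemma qg_poch_ne (q : ℝ) (h0 : 0 < q) (h1 : q < 1) : qPochInf q q ≠ 0 := by
  have := tprod_one_add_ne_zero_of_summable (f := fun k : ℕ => -((q:ℂ) * (q:ℂ)^k)) ?_
    (qg_pochsum q q h0 h1)
  · simpa [qPochInf, sub_eq_add_neg] using this
  · intro k
    have : q * q^k < 1 := by
      rw [← pow_succ']; exact pow_lt_one₀ h0.le h1 (by omega)
    have h : (1 - q * q^k : ℝ) ≠ 0 := by linarith
    rw [← sub_eq_add_neg]
    exact_mod_cast h

lemma qg_poch_succ (a : ℂ) (q : ℝ) (h0 : 0 < q) (h1 : q < 1) :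
    qPochInf a q = (1 - a) * qPochInf (a * q) q := by
  have e1 := (tendsto_add_atTop_iff_nat 1).mpr (qg_poch_tendsto a q h0 h1)
  have e2 := (qg_poch_tendsto (a * q) q h0 h1).const_mul (1 - a)
  refine tendsto_nhds_unique e1 (e2.congr fun n => ?_)
  rw [Finset.prod_range_succ', mul_comm]
  congr 1
  · exact Finset.prod_congr rfl fun k _ => by ring
  · simp

lemma qg_partial (z : ℂ) (q : ℝ) (h0 : 0 < q) (h1 : q < 1) (n : ℕ) :
    ∏ k ∈ Finset.range n, qgF z q k =
      (∏ k ∈ Finset.range n, (1 - (Complex.exp (z * (Real.log q : ℂ)) * q) * (q:ℂ)^k)) /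
      (∏ k ∈ Finset.range n, (1 - (q:ℂ) * (q:ℂ)^k)) *
      Complex.exp (z * ((Real.log (1 - q) - Real.log (1 - q^(n+1)) : ℝ) : ℂ)) := by
  have hp : ∀ j : ℕ, 1 - q^(j+1) ≠ 0 := fun j => by
    have := pow_lt_one₀ h0.le h1 (show j+1 ≠ 0 by omega)
    linarith
  induction n with
  | zero => simp
  | succ n ih =>
    rw [Finset.prod_range_succ, ih, Finset.prod_range_succ, Finset.prod_range_succ, qgF,
      Real.log_div (hp n) (hp (n+1))]
    have : z * ((Real.log (1 - q) - Real.log (1 - q^(n+1+1)) : ℝ) : ℂ) =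
      z * ((Real.log (1 - q) - Real.log (1 - q^(n+1)) : ℝ) : ℂ) +
      z * ((Real.log (1 - q^(n+1)) - Real.log (1 - q^(n+1+1)) : ℝ) : ℂ) := by push_cast; ring
    rw [this, Complex.exp_add, mul_div_mul_comm]
    ring

lemma qg_tprod (z : ℂ) (t : ℝ) (ht : 0 < t) (ht1 : t ≤ 1) :
    ∏' k, qgF z (Real.exp (-t)) k =
      qPochInf (Complex.exp (z * (Real.log (Real.exp (-t)) : ℂ)) * (Real.exp (-t) : ℝ)) (Real.exp (-t) : ℝ)
      / qPochInf (Real.exp (-t) : ℝ) (Real.exp (-t) : ℝ) *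
      Complex.exp (z * (Real.log (1 - Real.exp (-t)) : ℂ)) := by
  set q := Real.exp (-t) with hq
  have h0 : 0 < q := Real.exp_pos _
  have h1 : q < 1 := by rw [hq, Real.exp_lt_one_iff]; linarith
  have e1 := (qg_mult z t ht ht1).tendsto_prod_tprod_nat
  refine tendsto_nhds_unique e1 ?_
  simp_rw [← hq, qg_partial z q h0 h1]
  refine ((qg_poch_tendsto _ q h0 h1).div (qg_poch_tendsto _ q h0 h1) (qg_poch_ne q h0 h1)).mul ?_
  have e2 : Tendsto (fun n : ℕ => 1 - q^(n+1)) atTop (𝓝 1) := by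
    have := ((tendsto_add_atTop_iff_nat 1).mpr (tendsto_pow_atTop_nhds_zero_of_lt_one h0.le h1)).const_sub 1
    simpa using this
  have e3 : Tendsto (fun n : ℕ => Real.log (1 - q) - Real.log (1 - q^(n+1))) atTop (𝓝 (Real.log (1 - q))) := by
    have := ((Real.continuousAt_log one_ne_zero).tendsto.comp e2).const_sub (Real.log (1 - q))
    simpa using this
  exact ((Complex.continuous_exp.comp (continuous_const.mul Complex.continuous_ofReal)).tendsto _).comp e3

lemma qg_inv (z : ℂ) (t : ℝ) (ht : 0 < t) (ht1 : t ≤ 1) :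
    qGamma (Real.exp (-t)) z =
      (((1 - Complex.exp (z * (Real.log (Real.exp (-t)) : ℂ))) / (1 - (Real.exp (-t) : ℝ))) *
        ∏' k, qgF z (Real.exp (-t)) k)⁻¹ := by
  rw [qg_tprod z t ht ht1]
  set q := Real.exp (-t) with hq
  have h0 : 0 < q := Real.exp_pos _
  have h1 : q < 1 := by rw [hq, Real.exp_lt_one_iff]; linarith
  rw [qGamma, qg_poch_succ (Complex.exp (z * (Real.log q : ℂ))) q h0 h1, sub_mul 1 z, one_mul, Complex.exp_sub]
  have : Complex.exp (Real.log (1 - q) : ℂ) = 1 - q := by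
    rw [← Complex.ofReal_exp, Real.exp_log (by linarith)]; push_cast; rfl
  rw [this]
  simp only [mul_inv, inv_div, div_eq_mul_inv, inv_inv]
  ring

lemma qg_slope (a : ℂ) :
    Tendsto (fun q : ℝ => (1 - Complex.exp (a * (Real.log q : ℂ))) / (1 - (q:ℂ)))
      (𝓝[Set.Ioo 0 1] 1) (𝓝 a) := by
  have hd : HasDerivAt (fun q : ℝ => Complex.exp (a * (Real.log q : ℂ))) a 1 := by
    have h1 : HasDerivAt (fun q : ℝ => (Real.log q : ℂ)) ((1:ℝ)⁻¹ : ℝ) 1 :=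
      (Real.hasDerivAt_log one_ne_zero).ofReal_comp
    simpa using (h1.const_mul a).cexp
  have := (hasDerivAt_iff_tendsto_slope.mp hd).mono_left
    (nhdsWithin_mono 1 (fun q hq => by simp; exact hq.2.ne) : 𝓝[Set.Ioo 0 1] (1:ℝ) ≤ _)
  refine this.congr fun q => ?_
  rw [slope_def_module]
  simp only [Real.log_one, Complex.ofReal_zero, mul_zero, Complex.exp_zero]
  rw [Complex.real_smul]
  push_cast
  rw [← neg_sub (Complex.exp _) 1, ← neg_sub (q:ℂ) 1, neg_div_neg_eq, div_eq_inv_mul]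

lemma qg_slope_nat (k : ℕ) :
    Tendsto (fun q : ℝ => (1 - q^k) / (1 - q)) (𝓝[Set.Ioo 0 1] 1) (𝓝 (k:ℝ)) := by
  have hd : HasDerivAt (fun q : ℝ => q^k) k 1 := by
    simpa using hasDerivAt_pow k (1:ℝ)
  have := (hasDerivAt_iff_tendsto_slope.mp hd).mono_left
    (nhdsWithin_mono 1 (fun q hq => by simp; exact hq.2.ne) : 𝓝[Set.Ioo 0 1] (1:ℝ) ≤ _)
  refine this.congr fun q => ?_
  rw [slope_def_field, one_pow, ← neg_sub (q^k) 1, ← neg_sub q 1, neg_div_neg_eq]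

noncomputable def qgG (z : ℂ) (k : ℕ) : ℂ :=
  (z + (k + 1)) / (k + 1) * Complex.exp (z * (Real.log (((k:ℝ) + 1) / (k + 2)) : ℝ))

lemma qg_lim (z : ℂ) (k : ℕ) :
    Tendsto (fun q : ℝ => qgF z q k) (𝓝[Set.Ioo 0 1] 1) (𝓝 (qgG z k)) := by
  have a1 := qg_slope (z + (k + 1))
  have a2 := qg_slope_nat (k + 1)
  have a3 := qg_slope_nat (k + 2)
  have a2c : Tendsto (fun q : ℝ => (((1 - q^(k+1)) / (1 - q) : ℝ) : ℂ)) (𝓝[Set.Ioo 0 1] 1)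
      (𝓝 ((k : ℂ) + 1)) := by
    have := (Complex.continuous_ofReal.tendsto _).comp a2
    simpa [Function.comp_def] using this
  have hk : (k:ℂ) + 1 ≠ 0 := by exact_mod_cast Nat.succ_ne_zero k
  have b1 := a1.div a2c hk
  have b2 := a2.div a3 (by positivity)
  have b3 := b2.log (by positivity)
  have b4 := ((Complex.continuous_exp.comp (continuous_const.mul Complex.continuous_ofReal
    : Continuous fun x : ℝ => z * (x:ℂ))).tendsto _).comp b3
  have b5 := b1.mul b4
  rw [qgG]
  have : (z + (k + 1)) / (k + 1) * Complex.exp (z * (Real.log (((k:ℝ) + 1) / (k + 2)) : ℝ)) =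
    (z + (k + 1)) / (k + 1) * (Complex.exp ∘ fun x : ℝ => z * (x:ℂ)) (Real.log (((k + 1 : ℕ):ℝ) / ((k + 2 : ℕ) : ℝ))) := by
    simp
  rw [this]
  refine b5.congr' ?_
  filter_upwards [self_mem_nhdsWithin] with q hq
  have hq1 : 1 - q ≠ 0 := by linarith [hq.2]
  have hq1c : 1 - (q:ℂ) ≠ 0 := by exact_mod_cast hq1
  simp only [Pi.div_apply, Function.comp, qgF]
  rw [div_div_div_cancel_right₀ hq1]
  congr 1
  push_cast
  rw [div_div_div_cancel_right₀ hq1c, add_mul, Complex.exp_add]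
  congr 3
  have : ((k:ℂ) + 1) * (Real.log q : ℂ) = ((k + 1 : ℕ) : ℂ) * (Real.log q : ℂ) := by push_cast; rfl
  rw [this, Complex.exp_nat_mul, ← Complex.ofReal_exp, Real.exp_log hq.1]

lemma qg_ev : ∀ᶠ q : ℝ in 𝓝[Set.Ioo 0 1] 1, ∃ t : ℝ, 0 < t ∧ t ≤ 1 ∧ q = Real.exp (-t) := by
  have h : ∀ᶠ q : ℝ in 𝓝[Set.Ioo 0 1] 1, Real.exp (-1) < q :=
    mem_nhdsWithin_of_mem_nhds (lt_mem_nhds (by rw [Real.exp_lt_one_iff]; norm_num))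
  filter_upwards [self_mem_nhdsWithin, h] with q hq hq2
  refine ⟨-Real.log q, by linarith [Real.log_neg hq.1 hq.2], ?_, by rw [neg_neg, Real.exp_log hq.1]⟩
  have := (Real.lt_log_iff_exp_lt hq.1).mpr hq2
  linarith

lemma qg_G_bound (z : ℂ) (k : ℕ) : ‖qgG z k - 1‖ ≤ qgC z / ((k:ℝ) + 1)^2 := by
  have : (𝓝[Set.Ioo 0 1] (1:ℝ)).NeBot := by
    rw [nhdsWithin_Ioo_eq_nhdsLT zero_lt_one]; infer_instance
  refine le_of_tendsto ((qg_lim z k).sub_const 1).norm ?_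
  filter_upwards [qg_ev] with q ⟨t, h0, h1, h⟩
  rw [h]; exact qg_bound z t h0 h1 k

lemma qg_tprod_lim (z : ℂ) :
    Tendsto (fun q : ℝ => ∏' k, qgF z q k) (𝓝[Set.Ioo 0 1] 1) (𝓝 (∏' k, qgG z k)) := by
  have := tendsto_tprod_one_add_of_dominated_convergence (𝓕 := 𝓝[Set.Ioo 0 1] (1:ℝ))
    (f := fun q k => qgF z q k - 1) (g := fun k => qgG z k - 1) (qg_summable (qgC z))
    (fun k => (qg_lim z k).sub_const 1) (by
      filter_upwards [qg_ev] with q ⟨t, h0, h1, h⟩ k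
      rw [h]; exact qg_bound z t h0 h1 k)
  simpa using this

lemma qg_G_partial (z : ℂ) (hz : ∀ n : ℕ, z ≠ -(n : ℂ)) (n : ℕ) :
    z * ∏ k ∈ Finset.range n, qgG z k =
      (Complex.GammaSeq z (n + 1))⁻¹ * (((n + 1 : ℕ) : ℂ) / (z + (n + 1 : ℕ))) := by
  have hne : ∀ k : ℕ, z + (k : ℂ) ≠ 0 := fun k h => hz k (eq_neg_of_add_eq_zero_left h)
  have hs : ∀ k : ℕ, ((k : ℂ) + 1) ≠ 0 := fun k => by exact_mod_cast Nat.succ_ne_zero k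
  have hP : ∏ k ∈ Finset.range n, qgG z k = (∏ k ∈ Finset.range n, (z + ((k + 1 : ℕ) : ℂ))) / (n.factorial : ℂ)
      * Complex.exp (-(z * (Real.log ((n : ℝ) + 1) : ℝ))) := by
    induction n with
    | zero => simp
    | succ n ih =>
      rw [Finset.prod_range_succ, ih, Finset.prod_range_succ, qgG, Nat.factorial_succ,
        Real.log_div (by positivity) (by positivity)]
      have : -(z * ((Real.log (((n + 1 : ℕ) : ℝ) + 1) : ℝ) : ℂ)) =
        -(z * ((Real.log ((n : ℝ) + 1) : ℝ) : ℂ)) +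
        z * ((Real.log ((n : ℝ) + 1) - Real.log ((n:ℝ) + 2) : ℝ) : ℂ) := by
        rw [show ((n + 1 : ℕ) : ℝ) + 1 = (n:ℝ) + 2 by push_cast; ring]
        push_cast; ring
      rw [this, Complex.exp_add]
      have := hs n
      have hf : (n.factorial : ℂ) ≠ 0 := by exact_mod_cast n.factorial_ne_zero
      push_cast
      field_simp
  rw [hP, Complex.GammaSeq, Finset.prod_range_succ, Finset.prod_range_succ', Nat.factorial_succ]
  have hc : (((n + 1 : ℕ) : ℂ))^z = Complex.exp (z * (Real.log ((n : ℝ) + 1) : ℝ)) := by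
    rw [Complex.cpow_def_of_ne_zero (by exact_mod_cast Nat.succ_ne_zero n), mul_comm,
      Complex.ofReal_log (by positivity)]
    push_cast; rfl
  rw [hc, Complex.exp_neg]
  have h1 := hne (n + 1)
  have h2 := hs n
  have hf : (n.factorial : ℂ) ≠ 0 := by exact_mod_cast n.factorial_ne_zero
  have he := Complex.exp_ne_zero (z * (Real.log ((n : ℝ) + 1) : ℝ))
  generalize Complex.exp (z * (Real.log ((n : ℝ) + 1) : ℝ)) = E at *
  generalize ∏ k ∈ Finset.range n, (z + ((k + 1 : ℕ) : ℂ)) = P at *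
  push_cast at *
  simp only [add_zero]
  field_simp

lemma qg_G_tprod (z : ℂ) (hz : ∀ n : ℕ, z ≠ -(n : ℂ)) :
    z * ∏' k, qgG z k = (Complex.Gamma z)⁻¹ := by
  have hm : Multipliable (qgG z) := by
    have : Summable (fun k => ‖qgG z k - 1‖) :=
      Summable.of_nonneg_of_le (fun _ => norm_nonneg _) (qg_G_bound z) (qg_summable _)
    simpa using multipliable_one_add_of_summable this
  have e1 := hm.tendsto_prod_tprod_nat.const_mul z
  have e2 := ((tendsto_add_atTop_iff_nat 1).mpr (Complex.GammaSeq_tendsto_Gamma z)).inv₀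
    (Complex.Gamma_ne_zero hz)
  have e3 : Tendsto (fun n : ℕ => (n : ℂ) / (z + n)) atTop (𝓝 1) := by
    simpa [add_comm] using tendsto_natCast_div_add_atTop (𝕜 := ℂ) z
  have e4 := e2.mul ((tendsto_add_atTop_iff_nat 1).mpr e3)
  rw [mul_one] at e4
  exact tendsto_nhds_unique e1 (e4.congr fun n => (qg_G_partial z hz n).symm)

theorem qGamma_tendsto_Gamma (z : ℂ) (hz : ∀ n : ℕ, z ≠ -(n : ℂ)) :
    Filter.Tendsto (fun q : ℝ => qGamma q z) (nhdsWithin 1 (Set.Ioo 0 1))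
      (nhds (Complex.Gamma z)) := by
  have h := (qg_slope z).mul (qg_tprod_lim z)
  rw [qg_G_tprod z hz] at h
  have h2 := h.inv₀ (inv_ne_zero (Complex.Gamma_ne_zero hz))
  rw [inv_inv] at h2
  refine h2.congr' ?_
  filter_upwards [qg_ev] with q ⟨t, h0, h1, h⟩
  rw [h]; exact (qg_inv z t h0 h1).symm
end

section
/- (Heine's q-Gauss summation formula) Let q, a, b, c be complex numbers with |q| < 1, a ≠ 0, b ≠ 0, |c/(ab)| < 1, and c ∉ {q^{-m} : m = 0,1,2,...}. Then ∑_{n=0}^∞ ((a;q)_n (b;q)_n / ((q;q)_n (c;q)_n)) (c/(ab))^n = (c/a;q)_∞ (c/b;q)_∞ / ((c;q)_∞ (c/(ab);q)_∞). -/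
open Filter Topology

lemma qg_summable_s11 (a q : ℂ) (hq : ‖q‖ < 1) : Summable (fun k : ℕ => ‖-(a * q ^ k)‖) := by
  simp only [norm_neg, norm_mul, norm_pow]
  exact (summable_geometric_of_lt_one (norm_nonneg q) hq).mul_left _

lemma qg_lim_s11 (a q : ℂ) (hq : ‖q‖ < 1) :
    Tendsto (qPoch a q) atTop (𝓝 (qPochInf a q)) := by
  have h := (multipliable_one_add_of_summable (qg_summable_s11 a q hq)).tendsto_prod_tprod_nat
  simp only [← sub_eq_add_neg] at h
  exact h

lemma qg_ne (a q : ℂ) (hq : ‖q‖ < 1) (ha : ∀ m : ℕ, a * q ^ m ≠ 1) : qPochInf a q ≠ 0 := by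
  have h := tprod_one_add_ne_zero_of_summable (f := fun k : ℕ => -(a * q ^ k))
    (fun i => by rw [← sub_eq_add_neg]; exact sub_ne_zero.2 (ha i).symm) (qg_summable_s11 a q hq)
  simp only [← sub_eq_add_neg] at h
  exact h

lemma qg_ne_fin (a q : ℂ) (ha : ∀ m : ℕ, a * q ^ m ≠ 1) (n : ℕ) : qPoch a q n ≠ 0 :=
  Finset.prod_ne_zero_iff.2 fun i _ => sub_ne_zero.2 (ha i).symm

lemma qg_bdd_of_tendsto (u : ℕ → ℂ) (l : ℂ) (h : Tendsto u atTop (𝓝 l)) :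
    ∃ M : ℝ, 0 < M ∧ ∀ n, ‖u n‖ ≤ M := by
  obtain ⟨M, hM⟩ := (Metric.isBounded_range_of_tendsto u h).exists_norm_le
  exact ⟨max M 1, by positivity, fun n => (hM _ ⟨n, rfl⟩).trans (le_max_left _ _)⟩

lemma qg_lt_ne (x q : ℂ) (hq : ‖q‖ < 1) (hx : ‖x‖ < 1) (m : ℕ) : x * q ^ m ≠ 1 := by
  intro h
  have h1 : ‖x * q ^ m‖ < 1 := by
    rw [norm_mul, norm_pow]
    calc ‖x‖ * ‖q‖ ^ m ≤ ‖x‖ * 1 := by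
          gcongr; exact pow_le_one₀ (norm_nonneg _) hq.le
      _ < 1 := by simpa using hx
  rw [h] at h1
  simp at h1

lemma qg_split (c q : ℂ) (N n : ℕ) :
    qPoch c q (N + n) = qPoch c q N * qPoch (c * q ^ N) q n := by
  simp only [qPoch, Finset.prod_range_add, pow_add, mul_assoc]

lemma qg_succ (c q : ℂ) (n : ℕ) : qPoch c q (n + 1) = qPoch c q n * (1 - c * q ^ n) :=
  Finset.prod_range_succ _ _

/-- The general term. -/
noncomputable def qgT (q a b c : ℂ) (n : ℕ) : ℂ :=
  qPoch a q n * qPoch b q n / (qPoch q q n * qPoch c q n) * (c / (a * b)) ^ n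

lemma qg_bound_s11 (q a b c : ℂ) (hq : ‖q‖ < 1) (hc : ∀ m : ℕ, c * q ^ m ≠ 1) :
    ∃ K : ℝ, 0 < K ∧ ∀ N n : ℕ,
      ‖qgT q a b (c * q ^ N) n‖ ≤ K * (‖c / (a * b)‖ ^ n * (‖q‖ ^ n) ^ N) := by
  obtain ⟨A, hA, hA'⟩ := qg_bdd_of_tendsto _ _ (qg_lim_s11 a q hq)
  obtain ⟨B, hB, hB'⟩ := qg_bdd_of_tendsto _ _ (qg_lim_s11 b q hq)
  obtain ⟨C, hC, hC'⟩ := qg_bdd_of_tendsto _ _ (qg_lim_s11 c q hq)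
  obtain ⟨D, hD, hD'⟩ := qg_bdd_of_tendsto _ _ ((qg_lim_s11 c q hq).inv₀ (qg_ne c q hq hc))
  obtain ⟨E, hE, hE'⟩ := qg_bdd_of_tendsto _ _
    ((qg_lim_s11 q q hq).inv₀ (qg_ne q q hq (qg_lt_ne q q hq hq)))
  refine ⟨A * B * (E * (C * D)), by positivity, fun N n => ?_⟩
  have h1 : qgT q a b (c * q ^ N) n = qPoch a q n * qPoch b q n *
      ((qPoch q q n)⁻¹ * (qPoch c q N * (qPoch c q (N + n))⁻¹)) *
      ((c / (a * b)) ^ n * (q ^ n) ^ N) := by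
    have h2 := qg_ne_fin c q hc N
    have h3 : (c * q ^ N / (a * b)) ^ n = (c / (a * b)) ^ n * (q ^ n) ^ N := by
      rw [← pow_mul, mul_comm n N, pow_mul, ← mul_pow]; congr 1; ring
    rw [qgT, h3, qg_split, mul_inv, mul_inv_cancel_left₀ h2, ← mul_inv, ← div_eq_mul_inv]
  rw [h1]
  simp only [norm_mul, norm_pow]
  gcongr
  exacts [hA' n, hB' n, hE' n, hC' N, hD' (N + n)]

lemma qg_summ (q a b c : ℂ) (hq : ‖q‖ < 1) (h : ‖c / (a * b)‖ < 1)
    (hc : ∀ m : ℕ, c * q ^ m ≠ 1) : Summable (qgT q a b c) := by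
  obtain ⟨K, hK, hb⟩ := qg_bound_s11 q a b c hq hc
  refine Summable.of_norm_bounded
    ((summable_geometric_of_lt_one (norm_nonneg _) h).mul_left K) fun n => ?_
  simpa using hb 0 n

lemma qg_tele (q a b c : ℂ) (hq : ‖q‖ < 1) (ha : a ≠ 0) (hb : b ≠ 0)
    (hc : ∀ m : ℕ, c * q ^ m ≠ 1) (n : ℕ) :
    (1 - c) * (1 - c / (a * b)) * qgT q a b c n
      - (1 - c / a) * (1 - c / b) * qgT q a b (c * q) n
    = (1 - c) * ((1 - q ^ n) * qgT q a b c n - (1 - q ^ (n + 1)) * qgT q a b c (n + 1)) := by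
  have hc0 : 1 - c ≠ 0 := sub_ne_zero.2 (by simpa using (hc 0).symm)
  have hcn : 1 - c * q ^ n ≠ 0 := sub_ne_zero.2 (hc n).symm
  have hqn : 1 - q * q ^ n ≠ 0 := sub_ne_zero.2 (qg_lt_ne q q hq hq n).symm
  have hC := qg_ne_fin c q hc n
  have hQ := qg_ne_fin q q (qg_lt_ne q q hq hq) n
  have e1 : qPoch (c * q) q n = qPoch c q n * (1 - c * q ^ n) / (1 - c) := by
    have := qg_split c q 1 n
    rw [add_comm, qg_succ] at this
    rw [this]
    simp [qPoch]
    field_simp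
  have e2 : qgT q a b (c * q) n = qgT q a b c n * ((1 - c) * q ^ n / (1 - c * q ^ n)) := by
    have : (c * q / (a * b)) ^ n = (c / (a * b)) ^ n * q ^ n := by
      rw [← mul_pow]; congr 1; ring
    rw [qgT, qgT, e1, this]
    field_simp
  have e3 : (1 - q ^ (n + 1)) * qgT q a b c (n + 1) = qgT q a b c n *
      ((1 - a * q ^ n) * (1 - b * q ^ n) * (c / (a * b)) / (1 - c * q ^ n)) := by
    rw [qgT, qgT, qg_succ, qg_succ, qg_succ, qg_succ, pow_succ (c / (a * b)), pow_succ' q]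
    generalize (c / (a * b)) ^ n = X
    field_simp
  rw [e2, e3]
  generalize qgT q a b c n = t
  generalize q ^ n = Q at *
  field_simp
  ring

lemma qg_step (q a b c : ℂ) (hq : ‖q‖ < 1) (ha : a ≠ 0) (hb : b ≠ 0)
    (h : ‖c / (a * b)‖ < 1) (hc : ∀ m : ℕ, c * q ^ m ≠ 1) :
    (1 - c) * (1 - c / (a * b)) * ∑' n, qgT q a b c n
      = (1 - c / a) * (1 - c / b) * ∑' n, qgT q a b (c * q) n := by
  have hs := qg_summ q a b c hq h hc
  have hs' : Summable (qgT q a b (c * q)) := by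
    refine qg_summ q a b (c * q) hq ?_ fun m => ?_
    · rw [mul_div_right_comm, norm_mul]
      nlinarith [norm_nonneg q, norm_nonneg (c / (a * b))]
    · have := hc (m + 1)
      rwa [pow_succ', ← mul_assoc] at this
  have hl := ((hs.hasSum.mul_left ((1 - c) * (1 - c / (a * b)))).sub
    (hs'.hasSum.mul_left ((1 - c / a) * (1 - c / b)))).tendsto_sum_nat
  have hg : Tendsto (fun n : ℕ => -((1 - c) * ((1 - q ^ n) * qgT q a b c n))) atTop (𝓝 0) := by
    have := (((tendsto_pow_atTop_nhds_zero_of_norm_lt_one hq).const_sub 1).mul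
      hs.tendsto_atTop_zero).const_mul (1 - c)
    simpa using this.neg
  have he : ∀ N : ℕ, ∑ n ∈ Finset.range N, ((1 - c) * (1 - c / (a * b)) * qgT q a b c n
      - (1 - c / a) * (1 - c / b) * qgT q a b (c * q) n)
      = -((1 - c) * ((1 - q ^ N) * qgT q a b c N)) := by
    intro N
    induction N with
    | zero => simp
    | succ N ih => rw [Finset.sum_range_succ, ih, qg_tele q a b c hq ha hb hc]; ring
  simp only [he] at hl
  exact sub_eq_zero.1 (tendsto_nhds_unique hl hg)

lemma qg_iter (q a b c : ℂ) (hq : ‖q‖ < 1) (ha : a ≠ 0) (hb : b ≠ 0)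
    (h : ‖c / (a * b)‖ < 1) (hc : ∀ m : ℕ, c * q ^ m ≠ 1) (N : ℕ) :
    qPoch c q N * qPoch (c / (a * b)) q N * ∑' n, qgT q a b c n
      = qPoch (c / a) q N * qPoch (c / b) q N * ∑' n, qgT q a b (c * q ^ N) n := by
  induction N with
  | zero => simp [qPoch]
  | succ N ih =>
    have hs := qg_step q a b (c * q ^ N) hq ha hb ?_ fun m => ?_
    · simp only [qg_succ]
      rw [pow_succ, ← mul_assoc c]
      have e1 : c * q ^ N / (a * b) = c / (a * b) * q ^ N := by ring
      have e2 : c * q ^ N / a = c / a * q ^ N := by ring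
      have e3 : c * q ^ N / b = c / b * q ^ N := by ring
      rw [e1, e2, e3] at hs
      linear_combination (1 - c * q ^ N) * (1 - c / (a * b) * q ^ N) * ih +
        qPoch (c / a) q N * qPoch (c / b) q N * hs
    · rw [mul_div_right_comm, norm_mul, norm_pow]
      have := pow_le_one₀ (n := N) (norm_nonneg q) hq.le
      nlinarith [norm_nonneg (c / (a * b))]
    · have := hc (N + m)
      rwa [pow_add, ← mul_assoc] at this

lemma qg_limF (q a b c : ℂ) (hq : ‖q‖ < 1)
    (h : ‖c / (a * b)‖ < 1) (hc : ∀ m : ℕ, c * q ^ m ≠ 1) :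
    Tendsto (fun N : ℕ => ∑' n, qgT q a b (c * q ^ N) n) atTop (𝓝 1) := by
  obtain ⟨K, hK, hb⟩ := qg_bound_s11 q a b c hq hc
  have key := tendsto_tsum_of_dominated_convergence (𝓕 := atTop)
    (f := fun (N : ℕ) (n : ℕ) => qgT q a b (c * q ^ N) n)
    (g := fun n : ℕ => if n = 0 then (1 : ℂ) else 0)
    (bound := fun n => K * ‖c / (a * b)‖ ^ n)
    ((summable_geometric_of_lt_one (norm_nonneg _) h).mul_left K) ?_ ?_
  · simpa using key
  · intro n
    by_cases hn : n = 0
    · subst hn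
      simp [qgT, qPoch]
    · simp only [hn, if_false]
      refine squeeze_zero_norm (fun N => hb N n) ?_
      have := ((tendsto_pow_atTop_nhds_zero_of_lt_one (by positivity)
        (pow_lt_one₀ (norm_nonneg q) hq hn)).const_mul (‖c / (a * b)‖ ^ n)).const_mul K
      simpa using this
  · refine Eventually.of_forall fun N n => (hb N n).trans ?_
    have : (‖q‖ ^ n) ^ N ≤ 1 := pow_le_one₀ (by positivity) (pow_le_one₀ (norm_nonneg q) hq.le)
    gcongr
    exact mul_le_of_le_one_right (by positivity) this

/-- Heine's q-Gauss summation formula: for `|q| < 1`, `a, b ≠ 0`, `|c/(ab)| < 1`,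
with `c` avoiding the points `q^{-m}` (i.e. `c q^m ≠ 1`),
`₂φ₁(a,b;c;q,c/(ab)) = (c/a;q)_∞ (c/b;q)_∞ / ((c;q)_∞ (c/(ab);q)_∞)`. -/
theorem q_gauss_summation (q a b c : ℂ) (hq : ‖q‖ < 1) (ha : a ≠ 0) (hb : b ≠ 0)
    (h : ‖c / (a * b)‖ < 1) (hc : ∀ m : ℕ, c * q ^ m ≠ 1) :
    HasSum
      (fun n : ℕ =>
        qPoch a q n * qPoch b q n / (qPoch q q n * qPoch c q n) * (c / (a * b)) ^ n)
      (qPochInf (c / a) q * qPochInf (c / b) q /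
        (qPochInf c q * qPochInf (c / (a * b)) q)) := by
  have hs := qg_summ q a b c hq h hc
  have hx := qg_lt_ne (c / (a * b)) q hq h
  have h1 := ((qg_lim_s11 c q hq).mul (qg_lim_s11 (c / (a * b)) q hq)).mul_const (∑' n, qgT q a b c n)
  have h2 := ((qg_lim_s11 (c / a) q hq).mul (qg_lim_s11 (c / b) q hq)).mul (qg_limF q a b c hq h hc)
  simp only [qg_iter q a b c hq ha hb h hc] at h1
  have h3 := tendsto_nhds_unique h1 h2
  have h4 : ∑' n, qgT q a b c n = qPochInf (c / a) q * qPochInf (c / b) q /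
        (qPochInf c q * qPochInf (c / (a * b)) q) := by
    rw [eq_div_iff (mul_ne_zero (qg_ne c q hq hc) (qg_ne _ q hq hx))]
    linear_combination h3
  rw [← h4]
  exact hs.hasSum
end

section
/- (q-Chu–Vandermonde summation) Let q, a, c be complex numbers and n a nonnegative integer such that all denominator factors below are nonzero (in particular (c;q)_k ≠ 0 and (q;q)_k ≠ 0 for 0 ≤ k ≤ n). Then ∑_{k=0}^{n} ((a;q)_k (q^{-n};q)_k / ((q;q)_k (c;q)_k)) q^k = ((c/a;q)_n / (c;q)_n) a^n. -/
theorem qPoch_succ_right (a q : ℂ) (n : ℕ) :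
    qPoch a q (n + 1) = qPoch a q n * (1 - a * q ^ n) := by
  simp [qPoch, Finset.prod_range_succ]

theorem qPoch_succ_left (a q : ℂ) (n : ℕ) :
    qPoch a q (n + 1) = (1 - a) * qPoch (a * q) q n := by
  simp only [qPoch, Finset.prod_range_succ']
  rw [mul_comm]
  congr 1
  · simp
  · refine Finset.prod_congr rfl fun k _ => ?_
    ring

theorem qcv_aux (q : ℂ) (hq : q ≠ 0) (n : ℕ) : ∀ (a c : ℂ), a ≠ 0 →
    (∀ k ≤ n, qPoch q q k ≠ 0 ∧ qPoch c q k ≠ 0) →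
    ∑ k ∈ Finset.range (n + 1),
        qPoch a q k * qPoch (q ^ (-(n : ℤ))) q k / (qPoch q q k * qPoch c q k) * q ^ k =
      qPoch (c / a) q n / qPoch c q n * a ^ n := by
  induction n with
  | zero => intro a c _ _; simp [qPoch]
  | succ n ih =>
    intro a c ha h
    have hc1 := (h (n + 1) le_rfl).2
    have hc1' := hc1
    rw [qPoch_succ_left] at hc1'
    have h1c : 1 - c ≠ 0 := left_ne_zero_of_mul hc1'
    have hcqn : qPoch (c * q) q n ≠ 0 := right_ne_zero_of_mul hc1'
    have hcn : qPoch c q n ≠ 0 := (h n (by omega)).2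
    have e1 := ih a c ha (fun k hk => h k (by omega))
    have e2 := ih (a * q) (c * q) (mul_ne_zero ha hq) (fun k hk => by
      refine ⟨(h k (by omega)).1, ?_⟩
      have := (h (k + 1) (by omega)).2
      rw [qPoch_succ_left] at this
      exact right_ne_zero_of_mul this)
    obtain ⟨b, hb⟩ : ∃ b : ℂ, b = q ^ (-((n + 1 : ℕ) : ℤ)) := ⟨_, rfl⟩
    have hbq : q ^ (-(n : ℤ)) = b * q := by
      rw [hb, ← zpow_add_one₀ hq]; congr 1; push_cast; ring
    have hbn : b * q * q ^ n = 1 := by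
      rw [← hbq, zpow_neg, zpow_natCast]
      exact inv_mul_cancel₀ (pow_ne_zero _ hq)
    rw [← hb]
    rw [hbq] at e1 e2
    have hz : qPoch (b * q) q (n + 1) = 0 := by
      rw [qPoch_succ_right, hbn]; simp
    have e1' : ∑ k ∈ Finset.range (n + 1 + 1),
        qPoch a q k * qPoch (b * q) q k / (qPoch q q k * qPoch c q k) * q ^ k =
        qPoch (c / a) q n / qPoch c q n * a ^ n := by
      rw [Finset.sum_range_succ, e1, hz]; simp
    have e3 : ∑ k ∈ Finset.range (n + 1 + 1),
        qPoch a q k * qPoch b q k / (qPoch q q k * qPoch c q k) * q ^ k -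
        ∑ k ∈ Finset.range (n + 1 + 1),
        qPoch a q k * qPoch (b * q) q k / (qPoch q q k * qPoch c q k) * q ^ k =
        -(b * q) * (1 - a) / (1 - c) * ∑ k ∈ Finset.range (n + 1),
        qPoch (a * q) q k * qPoch (b * q) q k / (qPoch q q k * qPoch (c * q) q k) * q ^ k := by
      rw [← Finset.sum_sub_distrib, Finset.sum_range_succ', Finset.mul_sum]
      have h0 : ∀ x : ℂ, qPoch x q 0 = 1 := fun x => by simp [qPoch]
      simp only [h0, sub_self, add_zero]
      refine Finset.sum_congr rfl fun k hk => ?_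
      have hk' : k + 1 ≤ n + 1 := by have := Finset.mem_range.1 hk; omega
      obtain ⟨hA, hB⟩ := h (k + 1) hk'
      rw [qPoch_succ_right] at hA
      rw [qPoch_succ_left] at hB
      have hA1 := left_ne_zero_of_mul hA
      have hA2 := right_ne_zero_of_mul hA
      have hB2 := right_ne_zero_of_mul hB
      rw [qPoch_succ_left a, qPoch_succ_left b, qPoch_succ_right (b * q), qPoch_succ_right q,
        qPoch_succ_left c]
      generalize qPoch q q k = Q at *
      generalize qPoch (c * q) q k = C at *
      generalize qPoch (a * q) q k = A at *
      generalize qPoch (b * q) q k = B at *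
      obtain ⟨D, hD⟩ : ∃ D, D = 1 - q * q ^ k := ⟨_, rfl⟩
      have hqk : q ^ (k + 1) = 1 - D := by rw [hD]; ring
      have hbk : b * q * q ^ k = b * (1 - D) := by rw [hD]; ring
      rw [← hD] at hA2 ⊢
      rw [hbk, pow_succ]
      field_simp
      ring
    rw [e1', e2] at e3
    rw [sub_eq_iff_eq_add.1 e3, mul_div_mul_right _ _ hq, mul_pow, qPoch_succ_right (c / a)]
    have hcc : (1 - c) * qPoch (c * q) q n = qPoch c q n * (1 - c * q ^ n) := by
      rw [← qPoch_succ_left, qPoch_succ_right]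
    rw [qPoch_succ_right] at hc1 ⊢
    have hcl := right_ne_zero_of_mul hc1
    have step : -(b * q) * (1 - a) / (1 - c) *
        (qPoch (c / a) q n / qPoch (c * q) q n * (a ^ n * q ^ n)) =
        -(1 - a) * (qPoch (c / a) q n * a ^ n) / (qPoch c q n * (1 - c * q ^ n)) := by
      rw [← hcc]
      have : -(b * q) * (1 - a) / (1 - c) *
        (qPoch (c / a) q n / qPoch (c * q) q n * (a ^ n * q ^ n)) =
        (b * q * q ^ n) * (-(1 - a) * (qPoch (c / a) q n * a ^ n) /
          ((1 - c) * qPoch (c * q) q n)) := by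
        field_simp
      rw [this, hbn, one_mul]
    rw [step]
    generalize qPoch (c / a) q n = X at *
    have hX : X * (1 - c / a * q ^ n) * a = X * (a - c * q ^ n) := by
      field_simp
    rw [pow_succ, div_mul_eq_mul_div _ _ (a ^ n * a),
      show X * (1 - c / a * q ^ n) * (a ^ n * a) = X * (a - c * q ^ n) * a ^ n by
        rw [← hX]; ring]
    generalize qPoch c q n = Y at *
    generalize hE : 1 - c * q ^ n = E at *
    have : c * q ^ n = 1 - E := by rw [← hE]; ring
    rw [this]
    field_simp
    ring

/-- The q-Chu–Vandermonde summation: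
`∑_{k=0}^n ((a;q)_k (q^{-n};q)_k/((q;q)_k (c;q)_k)) q^k = ((c/a;q)_n/(c;q)_n) a^n`,
assuming nonzero denominator factors. -/
theorem q_chu_vandermonde (q a c : ℂ) (n : ℕ) (hq : q ≠ 0) (ha : a ≠ 0)
    (hden : ∀ k ≤ n, qPoch q q k ≠ 0 ∧ qPoch c q k ≠ 0) :
    ∑ k ∈ Finset.range (n + 1),
        qPoch a q k * qPoch (q ^ (-(n : ℤ))) q k / (qPoch q q k * qPoch c q k) * q ^ k =
      qPoch (c / a) q n / qPoch c q n * a ^ n := by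
  exact qcv_aux q hq n a c ha hden
end

section
/- (q-Pfaff–Saalschütz summation) Let q, a, b, c be complex numbers and n a nonnegative integer such that all denominator factors below are nonzero. Then ∑_{k=0}^{n} ((a;q)_k (b;q)_k (q^{-n};q)_k / ((q;q)_k (c;q)_k (a b c^{-1} q^{1-n};q)_k)) q^k = ((c/a;q)_n (c/b;q)_n) / ((c;q)_n (c/(ab);q)_n). -/
lemma qPoch_zero' (x q : ℂ) : qPoch x q 0 = 1 := by simp [qPoch]

lemma qPoch_succ' (x q : ℂ) (n : ℕ) : qPoch x q (n+1) = qPoch x q n * (1 - x * q ^ n) := by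
  simp [qPoch, Finset.prod_range_succ]

lemma qPoch_shift (x q : ℂ) (n : ℕ) : qPoch x q (n+1) = (1 - x) * qPoch (x * q) q n := by
  simp only [qPoch, Finset.prod_range_succ']
  rw [mul_comm]
  congr 1
  · simp
  · apply Finset.prod_congr rfl
    intro i _
    ring

lemma qPoch_add' (x q : ℂ) (k j : ℕ) :
    qPoch x q (k+j) = qPoch x q k * qPoch (x * q ^ k) q j := by
  simp only [qPoch, Finset.prod_range_add]
  congr 1
  apply Finset.prod_congr rfl
  intro i _
  ring

lemma qPoch_ne_of_le {x q : ℂ} {m n : ℕ} (h : m ≤ n) (hn : qPoch x q n ≠ 0) :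
    qPoch x q m ≠ 0 := by
  obtain ⟨j, rfl⟩ := Nat.exists_eq_add_of_le h
  rw [qPoch_add'] at hn
  exact left_ne_zero_of_mul hn

/-- cleared summand -/
noncomputable def tS (q a b d : ℂ) (n k : ℕ) : ℂ :=
  qPoch q q n / (qPoch q q k * qPoch q q (n-k)) * (qPoch a q k * qPoch b q k * d ^ k *
    qPoch d q (n-k) * qPoch (a*b*d*q^k) q (n-k))

/-- telescoping certificate -/
noncomputable def gS (q a b d : ℂ) (n k : ℕ) : ℂ :=
  - q^(n-k) * (qPoch q q n / (qPoch q q k * qPoch q q (n-k))) *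
    (qPoch a q (k+1) * qPoch b q (k+1) * d ^ (k+1) *
    qPoch d q (n-k) * qPoch (a*b*d*q^k) q (n-k))

lemma partial_sum (q a b d : ℂ) (n : ℕ) (hQ : qPoch q q (n+1) ≠ 0) (k : ℕ) (hk : k ≤ n) :
    ∑ i ∈ Finset.range (k+1), (tS q a b d (n+1) i -
      (1 - b*d*q^n)*(1-a*d*q^n) * tS q a b d n i) = gS q a b d n k := by
  induction k with
  | zero =>
    have h1 := qPoch_ne_of_le (Nat.le_succ n) hQ
    simp only [zero_add, Finset.sum_range_one, tS, gS, Nat.sub_zero, qPoch_zero', pow_zero,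
      mul_one, one_mul, div_self hQ, div_self h1]
    simp only [qPoch_succ', qPoch_zero']
    ring
  | succ k ih =>
    rw [Finset.sum_range_succ, ih (by omega)]
    obtain ⟨j, rfl⟩ := Nat.exists_eq_add_of_le hk
    have e1 : k + 1 + j + 1 - (k+1) = j + 1 := by omega
    have e2 : k + 1 + j - (k+1) = j := by omega
    have e3 : k + 1 + j - k = j + 1 := by omega
    have hV := qPoch_ne_of_le (show k+1 ≤ k+1+j+1 by omega) hQ
    have hW := qPoch_ne_of_le (show j+1 ≤ k+1+j+1 by omega) hQ
    simp only [tS, gS, e1, e2, e3]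
    rw [qPoch_shift (a*b*d*q^k) q j, qPoch_succ' (a*b*d*q^(k+1)) q j,
      show a*b*d*q^k*q = a*b*d*q^(k+1) by ring, qPoch_succ' q q (k+1+j),
      qPoch_succ' a q (k+1), qPoch_succ' b q (k+1), qPoch_succ' d q j]
    rw [qPoch_succ'] at hV hW
    rw [qPoch_succ' q q k, qPoch_succ' q q j]
    have v1 := left_ne_zero_of_mul hV
    have v2 := right_ne_zero_of_mul hV
    have w1 := left_ne_zero_of_mul hW
    have w2 := right_ne_zero_of_mul hW
    generalize qPoch (a*b*d*q^(k+1)) q j = X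
    generalize qPoch q q (k+1+j) = U
    generalize qPoch q q k = V at *
    generalize qPoch q q j = W at *
    generalize qPoch a q (k+1) = A
    generalize qPoch b q (k+1) = B
    generalize qPoch d q j = D
    simp only [pow_add, pow_one] at *
    generalize q^k = x at *
    generalize q^j = y at *
    generalize d^k = z at *
    have w3 : 1 - y * q ≠ 0 := by rwa [mul_comm]
    have v3 : 1 - x * q ≠ 0 := by rwa [mul_comm]
    field_simp
    ring

lemma cleared (q a b d : ℂ) (n : ℕ) (hQ : qPoch q q n ≠ 0) :
    ∑ i ∈ Finset.range (n+1), tS q a b d n i = qPoch (b*d) q n * qPoch (a*d) q n := by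
  induction n with
  | zero => simp [tS, qPoch_zero']
  | succ n ih =>
    have h1 := qPoch_ne_of_le (Nat.le_succ n) hQ
    have h := partial_sum q a b d n hQ n le_rfl
    rw [Finset.sum_sub_distrib, ← Finset.mul_sum, ih h1] at h
    rw [Finset.sum_range_succ, qPoch_succ' (b*d), qPoch_succ' (a*d)]
    have h2 : tS q a b d (n+1) (n+1) = - gS q a b d n n := by
      simp [tS, gS, qPoch_zero', h1, hQ]
    rw [h2]
    linear_combination h

lemma conv_term (q d : ℂ) (hq : q ≠ 0) (hd : d ≠ 0) (n k : ℕ) (hk : k ≤ n) :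
    qPoch (q ^ (-(n:ℤ))) q k * q^k * qPoch q q (n-k) * qPoch d q n =
    qPoch q q n * qPoch d q (n-k) * d^k * qPoch (d⁻¹ * q ^ (1-(n:ℤ))) q k := by
  induction k with
  | zero => simp [qPoch_zero']
  | succ k ih =>
    have ih := ih (by omega)
    obtain ⟨j, rfl⟩ := Nat.exists_eq_add_of_le hk
    have e2 : k + 1 + j - (k+1) = j := by omega
    have e3 : k + 1 + j - k = j + 1 := by omega
    rw [e3, qPoch_succ' q q j, qPoch_succ' d q j] at ih
    rw [e2, qPoch_succ' _ q k, qPoch_succ' _ q k]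
    have f1 : q ^ (-((k+1+j : ℕ):ℤ)) * q^k = (q^j)⁻¹ * q⁻¹ := by
      rw [zpow_neg, zpow_natCast, pow_add, pow_add]
      field_simp
    have f2 : d⁻¹ * q ^ (1-((k+1+j : ℕ):ℤ)) * q^k = d⁻¹ * (q^j)⁻¹ := by
      rw [zpow_sub₀ hq, zpow_natCast, pow_add, pow_add]
      field_simp
    rw [f1, f2]
    generalize qPoch (q ^ (-((k+1+j : ℕ):ℤ))) q k = P at *
    generalize qPoch (d⁻¹ * q ^ (1-((k+1+j : ℕ):ℤ))) q k = R at *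
    have hy : q^j ≠ 0 := pow_ne_zero _ hq
    rw [pow_succ q k, pow_succ d k]
    generalize q^j = y at *
    field_simp
    linear_combination (-1) * ih


/-- The q-Pfaff–Saalschütz summation formula for a terminating balanced ₃φ₂ series:
`∑_{k=0}^n ((a;q)_k (b;q)_k (q^{-n};q)_k/((q;q)_k (c;q)_k (abc⁻¹q^{1-n};q)_k)) q^k
  = ((c/a;q)_n (c/b;q)_n)/((c;q)_n (c/(ab);q)_n)`,
assuming nonzero denominator factors. -/
theorem q_pfaff_saalschutz (q a b c : ℂ) (n : ℕ)
    (hq : q ≠ 0) (ha : a ≠ 0) (hb : b ≠ 0) (hc : c ≠ 0)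
    (hden : ∀ k ≤ n, qPoch q q k ≠ 0 ∧ qPoch c q k ≠ 0 ∧
      qPoch (a * b * c⁻¹ * q ^ (1 - (n : ℤ))) q k ≠ 0)
    (hden' : qPoch (c / (a * b)) q n ≠ 0) :
    ∑ k ∈ Finset.range (n + 1),
        qPoch a q k * qPoch b q k * qPoch (q ^ (-(n : ℤ))) q k /
            (qPoch q q k * qPoch c q k * qPoch (a * b * c⁻¹ * q ^ (1 - (n : ℤ))) q k) *
          q ^ k =
      qPoch (c / a) q n * qPoch (c / b) q n / (qPoch c q n * qPoch (c / (a * b)) q n) := by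
  have hQ := (hden n le_rfl).1
  have hC := (hden n le_rfl).2.1
  obtain ⟨d, hd⟩ : ∃ d, d = c / (a*b) := ⟨_, rfl⟩
  have hd0 : d ≠ 0 := by rw [hd]; positivity
  have hcd : c = a*b*d := by rw [hd]; field_simp
  have g1 : c / a = b*d := by rw [hcd]; field_simp
  have g2 : c / b = a*d := by rw [hcd]; field_simp
  have g3 : a*b*c⁻¹ = d⁻¹ := by rw [hcd]; field_simp
  rw [← hd] at hden' ⊢
  rw [g3] at hden ⊢
  rw [g1, g2, mul_comm (qPoch c q n), ← cleared q a b d n hQ, Finset.sum_div]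
  apply Finset.sum_congr rfl
  intro k hk
  have hk : k ≤ n := by simpa [Nat.lt_succ_iff] using hk
  obtain ⟨h1, h2, h3⟩ := hden k hk
  have key := conv_term q d hq hd0 n k hk
  have h4 := qPoch_ne_of_le (Nat.sub_le n k) hQ
  have h5 : qPoch c q n = qPoch c q k * qPoch (c * q^k) q (n-k) := by
    rw [← qPoch_add']; congr 1; omega
  have h6 : qPoch (c * q^k) q (n-k) ≠ 0 := by
    rw [h5] at hC; exact right_ne_zero_of_mul hC
  rw [tS, ← hcd, h5]
  generalize qPoch (c * q^k) q (n-k) = X at *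
  generalize qPoch (d⁻¹ * q ^ (1 - (n:ℤ))) q k = R at *
  generalize qPoch (q ^ (-(n:ℤ))) q k = P at *
  field_simp
  linear_combination qPoch a q k * qPoch b q k * key
end
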